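/- Let a > -1, b > 0 and δ > 0 be given. Then there exists ε_* > 0 such that for every ε ∈ (0, ε_*] and every normalised self-similar profile φ_ε for K_ε one has ∫₀^∞ |φ_ε(x) − e^{−x}| ω_{a,b}(x) dx ≤ δ. In particular, any two normalised self-similar profiles φ¹_ε and φ²_ε for K_ε with ε ≤ ε_* satisfy ∫₀^∞ |φ¹_ε(x) − φ²_ε(x)| ω_{a,b}(x) dx ≤ 2δ. -/

import Mathlib

open MeasureTheory Real Set Filter

noncomputable def weight (a b x : ℝ) : ℝ := if x ≤ 1 then x ^ a else x ^ b

noncomputable def Xnorm (a b : ℝ) (g : ℝ → ℝ) : ℝ :=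
  ∫ x in Ioi (0:ℝ), |g x| * weight a b x

def MemX (a b : ℝ) (g : ℝ → ℝ) : Prop :=
  IntegrableOn (fun x => g x * weight a b x) (Ioi 0)

noncomputable def Kern (ε : ℝ) (W : ℝ → ℝ → ℝ) (x y : ℝ) : ℝ := 2 + ε * W x y

def GoodW (α : ℝ) (W : ℝ → ℝ → ℝ) : Prop :=
  ContinuousOn (fun p : ℝ × ℝ => W p.1 p.2) (Ioi 0 ×ˢ Ioi 0) ∧
  (∀ x y : ℝ, 0 < x → 0 < y → W x y = W y x) ∧
  (∀ l x y : ℝ, 0 < l → 0 < x → 0 < y → W (l * x) (l * y) = W x y) ∧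
  (∀ x y : ℝ, 0 < x → 0 < y → 0 ≤ W x y ∧ W x y ≤ (x / y) ^ α + (y / x) ^ α)

def IsProfile (K : ℝ → ℝ → ℝ) (φ : ℝ → ℝ) : Prop :=
  LocallyIntegrableOn φ (Ioi 0) ∧
  (∀ᵐ x ∂(volume.restrict (Ioi (0:ℝ))), 0 ≤ φ x) ∧
  IntegrableOn (fun x => x * φ x) (Ioi 0) ∧
  (∀ᵐ x ∂(volume.restrict (Ioi (0:ℝ))),
    x ^ 2 * φ x = ∫ y in Ioo 0 x, ∫ z in Ioi (x - y), y * K y z * φ y * φ z)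

def IsNormalised (φ : ℝ → ℝ) : Prop := ∫ x in Ioi (0:ℝ), x * φ x = 1

/-!
Let `Q p = ∫ (1 - e ^ (-p x)) dμ` for a profile `μ` of unit mass. Testing the equation against
`(1 - (1 + p x) e ^ (-p x)) / x ^ 2` gives
`2 (Q - p Q') = ∬ k(y, z) (1 - e ^ (-p y)) (1 - e ^ (-p z)) dμ dμ`. For `k = 2` this is the Riccati
equation `p Q' = Q - Q ^ 2`, and `Q p / p → 1` at `0` selects `Q p = p / (1 + p)`, the transform of
`e ^ (-x)`. For `2 ≤ k ≤ 2 + ε ((y / z) ^ α + (z / y) ^ α)` it becomes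
`Q ^ 2 ≤ Q - p Q' ≤ Q ^ 2 + ε C p ^ 2`, where `C` comes from moments of order at least `1`, bounded
by a bootstrap; integrating, `p / (1 + p) - ε C p ^ 2 ≤ Q p ≤ p / (1 + p)`.

The upper bound gives `μ univ ≤ 1`, and the lower one, at large `p`, that almost all of this number
of clusters lies in some `[x₀, ∞)`. Every smaller cluster then keeps colliding with those clusters,
which bounds the moments of all orders above `-1`. As `ε → 0`, convergence of `Q` implies weak
convergence of the profiles, hence pointwise convergence of their mass fluxes for the kernel `2`,
from which the true fluxes differ by `O(ε)` in `L¹`. The flux is `x ^ 2 φ(x)`, so the densities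
converge in `L¹` on compact subsets of `(0, ∞)`, while the moment bounds control the weighted tails.
Uniformity in the kernel and in the profile follows by contradiction along a sequence.
-/

open scoped ENNReal NNReal Topology

/-- The kernel `k` is symmetric and lies between the constant kernel `2` and
`2 + ε ((y / z) ^ α + (z / y) ^ α)` on the open quadrant. Kernels are uncurried and
`ℝ≥0∞`-valued, so that they can be integrated against product measures without side conditions. -/
structure IsNearTwo (α ε : ℝ) (k : ℝ × ℝ → ℝ≥0∞) : Prop where
  measurable : Measurable k
  swap : ∀ p, k p.swap = k p
  two_le : ∀ p, 0 < p.1 → 0 < p.2 → 2 ≤ k p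
  le : ∀ p, 0 < p.1 → 0 < p.2 →
    k p ≤ 2 + ENNReal.ofReal (ε * ((p.1 / p.2) ^ α + (p.2 / p.1) ^ α))

/-- The mass per unit time that coagulation with kernel `k` carries through size `x` when the
cluster sizes are distributed according to `μ`. -/
noncomputable def massFlux (k : ℝ × ℝ → ℝ≥0∞) (μ : Measure ℝ) (x : ℝ) : ℝ≥0∞ :=
  ∫⁻ p in {p : ℝ × ℝ | p.1 < x ∧ x < p.1 + p.2}, ENNReal.ofReal p.1 * k p ∂μ.prod μ

/-- A self-similar profile of unit mass, as a measure on the half-line: the equation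
`x ^ 2 φ(x) = flux through x` is an identity between `x ^ 2 μ(dx)` and a measure with density. -/
structure IsMeasureProfile (k : ℝ × ℝ → ℝ≥0∞) (μ : Measure ℝ) : Prop where
  ae_pos : ∀ᵐ x ∂μ, 0 < x
  lintegral_id : ∫⁻ x, ENNReal.ofReal x ∂μ = 1
  withDensity_sq : μ.withDensity (fun x => ENNReal.ofReal (x ^ 2)) =
    (volume.restrict (Ioi 0)).withDensity (massFlux k μ)

section SelfSimilarProfiles

variable {α ε : ℝ} {k : ℝ × ℝ → ℝ≥0∞} {μ : Measure ℝ}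

section Flux

lemma measurableSet_fluxRegion :
    MeasurableSet {q : ℝ × ℝ × ℝ | q.2.1 < q.1 ∧ q.1 < q.2.1 + q.2.2} :=
  (measurableSet_lt measurable_snd.fst measurable_fst).inter
    (measurableSet_lt measurable_fst (measurable_snd.fst.add measurable_snd.snd))

lemma measurableSet_fluxRegion_right (x : ℝ) :
    MeasurableSet {p : ℝ × ℝ | p.1 < x ∧ x < p.1 + p.2} :=
  measurable_prodMk_left measurableSet_fluxRegion

lemma measurable_massFlux [SFinite μ] (hk : Measurable k) : Measurable (massFlux k μ) := by
  have hm : Measurable fun q : ℝ × ℝ × ℝ => ENNReal.ofReal q.2.1 * k q.2 := by fun_prop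
  convert (hm.indicator measurableSet_fluxRegion).lintegral_prod_right' (ν := μ.prod μ) using 2
    with x
  exact (lintegral_indicator (measurableSet_fluxRegion_right x) _).symm

lemma massFlux_eq_lintegral_lintegral [SFinite μ] (hk : Measurable k) (x : ℝ) :
    massFlux k μ x =
      ∫⁻ y in Iio x, ∫⁻ z in Ioi (x - y), ENNReal.ofReal y * k (y, z) ∂μ ∂μ := by
  have hs := measurableSet_fluxRegion_right x
  have hm : Measurable fun p : ℝ × ℝ => ENNReal.ofReal p.1 * k p := by fun_prop
  rw [massFlux, ← lintegral_indicator hs, lintegral_prod _ (hm.indicator hs).aemeasurable,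
    ← lintegral_indicator measurableSet_Iio]
  refine lintegral_congr fun y => ?_
  by_cases hy : y < x
  · rw [indicator_of_mem (show y ∈ Iio x from hy), ← lintegral_indicator measurableSet_Ioi]
    refine lintegral_congr fun z => ?_
    simp only [indicator_apply, mem_ofPred_eq, hy, true_and, mem_Ioi, sub_lt_iff_lt_add']
  · simp [hy]

lemma lintegral_mul_massFlux [SFinite μ] (hk : Measurable k) {h : ℝ → ℝ≥0∞}
    (hh : Measurable h) :
    ∫⁻ x in Ioi 0, h x * massFlux k μ x =
      ∫⁻ p : ℝ × ℝ, ENNReal.ofReal p.1 * k p * (∫⁻ x in Ioo p.1 (p.1 + p.2), h x) ∂μ.prod μ := by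
  let F : ℝ × ℝ × ℝ → ℝ≥0∞ := {q : ℝ × ℝ × ℝ | q.2.1 < q.1 ∧ q.1 < q.2.1 + q.2.2}.indicator
    fun q => ENNReal.ofReal q.2.1 * k q.2 * h q.1
  have hF : Measurable F := Measurable.indicator (by fun_prop) measurableSet_fluxRegion
  calc ∫⁻ x in Ioi 0, h x * massFlux k μ x
      = ∫⁻ x in Ioi 0, (∫⁻ p, F (x, p) ∂μ.prod μ) := by
        refine lintegral_congr fun x => ?_
        rw [massFlux, ← lintegral_const_mul _ (by fun_prop),
          ← lintegral_indicator (measurableSet_fluxRegion_right x)]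
        refine lintegral_congr fun p => ?_
        simp only [F, indicator_apply, mem_ofPred_eq, mul_comm (h x)]
    _ = ∫⁻ p, (∫⁻ x in Ioi 0, F (x, p)) ∂μ.prod μ := lintegral_lintegral_swap hF.aemeasurable
    _ = _ := by
        refine lintegral_congr fun p => ?_
        rcases le_or_gt p.1 0 with hp | hp
        · simp [F, ENNReal.ofReal_eq_zero.2 hp, indicator_apply]
        · have hsub : Ioo p.1 (p.1 + p.2) ∩ Ioi 0 = Ioo p.1 (p.1 + p.2) :=
            inter_eq_left.2 fun x hx => hp.trans hx.1
          rw [← lintegral_const_mul _ hh, ← hsub, ← setLIntegral_indicator measurableSet_Ioo]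
          rfl

lemma setLIntegral_massFlux [SFinite μ] (hk : Measurable k) {s : Set ℝ} (hs : MeasurableSet s)
    (hs₀ : s ⊆ Ioi 0) :
    ∫⁻ x in s, massFlux k μ x =
      ∫⁻ p : ℝ × ℝ, ENNReal.ofReal p.1 * k p * volume (Ioo p.1 (p.1 + p.2) ∩ s) ∂μ.prod μ := by
  calc ∫⁻ x in s, massFlux k μ x
      = ∫⁻ x in Ioi 0, s.indicator (massFlux k μ) x := by
        rw [setLIntegral_indicator hs, inter_eq_left.2 hs₀]
    _ = ∫⁻ x in Ioi 0, s.indicator (fun _ => 1) x * massFlux k μ x := by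
        refine lintegral_congr fun x => ?_
        by_cases hx : x ∈ s <;> simp [hx]
    _ = _ := by
        rw [lintegral_mul_massFlux hk (measurable_const.indicator hs)]
        refine lintegral_congr fun p => ?_
        rw [setLIntegral_indicator hs, setLIntegral_one, inter_comm]

lemma IsMeasureProfile.lintegral_sq_mul_eq_massFlux [SFinite μ] (hμ : IsMeasureProfile k μ)
    (hk : Measurable k) {h : ℝ → ℝ≥0∞} (hh : Measurable h) :
    ∫⁻ x, ENNReal.ofReal (x ^ 2) * h x ∂μ = ∫⁻ x in Ioi 0, h x * massFlux k μ x := by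
  have hd := congrArg (fun ν => ∫⁻ x, h x ∂ν) hμ.withDensity_sq
  rw [lintegral_withDensity_eq_lintegral_mul _ (by fun_prop) hh,
    lintegral_withDensity_eq_lintegral_mul _ (measurable_massFlux hk) hh] at hd
  simpa only [Pi.mul_apply, mul_comm (massFlux k μ _)] using hd

lemma IsMeasureProfile.lintegral_sq_mul [SFinite μ] (hμ : IsMeasureProfile k μ)
    (hk : Measurable k) {h : ℝ → ℝ≥0∞} (hh : Measurable h) :
    ∫⁻ x, ENNReal.ofReal (x ^ 2) * h x ∂μ =
      ∫⁻ p : ℝ × ℝ, ENNReal.ofReal p.1 * k p * (∫⁻ x in Ioo p.1 (p.1 + p.2), h x) ∂μ.prod μ := by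
  rw [hμ.lintegral_sq_mul_eq_massFlux hk hh, lintegral_mul_massFlux hk hh]

lemma ae_prod_pos (hμ : ∀ᵐ x ∂μ, 0 < x) :
    ∀ᵐ p ∂μ.prod μ, 0 < p.1 ∧ 0 < p.2 :=
  (Measure.quasiMeasurePreserving_fst.ae hμ).and (Measure.quasiMeasurePreserving_snd.ae hμ)

end Flux

section Finiteness

lemma rpow_le_one_add (hα : α ∈ Icc 0 1) {t : ℝ} (ht : 0 ≤ t) : t ^ α ≤ 1 + t := by
  rcases le_total t 1 with h | h
  · linarith [rpow_le_one ht h hα.1]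
  · linarith [(rpow_le_rpow_of_exponent_le h hα.2).trans_eq (rpow_one t)]

lemma IsNearTwo.exists_le_mul_snd (hk : IsNearTwo α ε k) (hα : α ∈ Icc 0 1) (hε : 0 ≤ ε)
    {r R : ℝ} (hr : 0 < r) (hR : 0 ≤ R) :
    ∃ C : ℝ, 0 ≤ C ∧ ∀ p ∈ Icc r R ×ˢ Ici r, k p ≤ ENNReal.ofReal (C * p.2) := by
  refine ⟨(2 + ε * (2 + R / r)) / r + ε / r, by positivity, fun p ⟨⟨hrp, hpR⟩, hp⟩ => ?_⟩
  have hp' : r ≤ p.2 := hp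
  have hp₁ : 0 < p.1 := hr.trans_le hrp
  have hp₂ : 0 < p.2 := hr.trans_le hp
  have hratio : (p.1 / p.2) ^ α + (p.2 / p.1) ^ α ≤ 2 + R / r + p.2 / r := by
    have h₁ : p.1 / p.2 ≤ R / r := div_le_div₀ hR hpR hr hp
    have h₂ : p.2 / p.1 ≤ p.2 / r := div_le_div_of_nonneg_left hp₂.le hr hrp
    linarith [rpow_le_one_add hα (t := p.1 / p.2) (by positivity),
      rpow_le_one_add hα (t := p.2 / p.1) (by positivity)]
  have hscale : 2 + ε * (2 + R / r) ≤ (2 + ε * (2 + R / r)) / r * p.2 := by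
    rw [div_mul_eq_mul_div, le_div_iff₀ hr]
    gcongr
  calc k p ≤ 2 + ENNReal.ofReal (ε * ((p.1 / p.2) ^ α + (p.2 / p.1) ^ α)) := hk.le p hp₁ hp₂
    _ = ENNReal.ofReal (2 + ε * ((p.1 / p.2) ^ α + (p.2 / p.1) ^ α)) := by
        rw [ENNReal.ofReal_add (by norm_num) (by positivity), ENNReal.ofReal_ofNat]
    _ ≤ _ := by
        refine ENNReal.ofReal_le_ofReal ?_
        calc 2 + ε * ((p.1 / p.2) ^ α + (p.2 / p.1) ^ α)
            ≤ 2 + ε * (2 + R / r + p.2 / r) := by gcongr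
          _ = (2 + ε * (2 + R / r)) + ε / r * p.2 := by ring
          _ ≤ _ := by rw [add_mul]; gcongr

variable [SFinite μ]

lemma lintegral_ofReal_mul_ofReal (hμ : ∫⁻ x, ENNReal.ofReal x ∂μ = 1) :
    ∫⁻ p : ℝ × ℝ, ENNReal.ofReal p.1 * ENNReal.ofReal p.2 ∂μ.prod μ = 1 := by
  rw [lintegral_prod_mul (by fun_prop) (by fun_prop), hμ, mul_one]

lemma IsNearTwo.setLIntegral_rectangle_lt_top (hk : IsNearTwo α ε k) (hα : α ∈ Icc 0 1)
    (hε : 0 ≤ ε) (hμ : ∫⁻ x, ENNReal.ofReal x ∂μ = 1) {r R : ℝ} (hr : 0 < r) (hR : 0 ≤ R) :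
    ∫⁻ p in Icc r R ×ˢ Ici r, ENNReal.ofReal p.1 * k p ∂μ.prod μ < ∞ := by
  obtain ⟨C, hC, hle⟩ := hk.exists_le_mul_snd hα hε hr hR
  calc ∫⁻ p in Icc r R ×ˢ Ici r, ENNReal.ofReal p.1 * k p ∂μ.prod μ
      ≤ ∫⁻ p in Icc r R ×ˢ Ici r, ENNReal.ofReal C *
          (ENNReal.ofReal p.1 * ENNReal.ofReal p.2) ∂μ.prod μ := by
        refine setLIntegral_mono (by fun_prop) fun p hp => ?_
        calc ENNReal.ofReal p.1 * k p
            ≤ ENNReal.ofReal p.1 * ENNReal.ofReal (C * p.2) := by gcongr; exact hle p hp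
          _ = _ := by rw [ENNReal.ofReal_mul hC]; ring
    _ ≤ ∫⁻ p, ENNReal.ofReal C * (ENNReal.ofReal p.1 * ENNReal.ofReal p.2) ∂μ.prod μ :=
        setLIntegral_le_lintegral _ _
    _ < ∞ := by
        rw [lintegral_const_mul _ (by fun_prop), lintegral_ofReal_mul_ofReal hμ, mul_one]
        exact ENNReal.ofReal_lt_top

-- If the integral were infinite, the flux through every `x < c` would be infinite, so that `μ`
-- would not charge `(-∞, c)` and the integral would vanish.
lemma IsNearTwo.setLIntegral_Iio_prod_Ioi_lt_top (hk : IsNearTwo α ε k) (hα : α ∈ Icc 0 1)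
    (hε : 0 ≤ ε) (hpos : ∀ᵐ x ∂μ, 0 < x) (hμ : ∫⁻ x, ENNReal.ofReal x ∂μ = 1)
    (hflux : ∀ᵐ x ∂μ, massFlux k μ x ≠ ∞) (c : ℝ) :
    ∫⁻ p in Iio c ×ˢ Ioi c, ENNReal.ofReal p.1 * k p ∂μ.prod μ < ∞ := by
  by_contra! htop
  rw [top_le_iff] at htop
  have hfluxTop (x : ℝ) (hx : 0 < x) (hxc : x < c) : massFlux k μ x = ∞ := by
    have hsub : (Iio c ×ˢ Ioi c : Set (ℝ × ℝ)) ⊆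
        {p | p.1 < x ∧ x < p.1 + p.2} ∪ Icc x c ×ˢ Ici x ∪ {p | ¬0 < p.1} := by
      rintro p ⟨hp₁, hp₂⟩
      have hp₁' : p.1 < c := hp₁
      have hp₂' : c < p.2 := hp₂
      rcases le_or_gt p.1 0 with h | h
      · exact Or.inr h.not_gt
      rcases lt_or_ge p.1 x with h' | h'
      · exact Or.inl (Or.inl ⟨h', by linarith⟩)
      · exact Or.inl (Or.inr ⟨⟨h', hp₁'.le⟩, (hxc.trans hp₂').le⟩)
    have hnull : (μ.prod μ) {p | ¬0 < p.1} = 0 :=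
      ae_iff.1 ((ae_prod_pos hpos).mono fun p hp => hp.1)
    have hle := (lintegral_mono_set hsub).trans (lintegral_union_le
      (μ := μ.prod μ) (fun p => ENNReal.ofReal p.1 * k p) _ _)
    rw [htop, setLIntegral_measure_zero _ _ hnull, add_zero, top_le_iff] at hle
    have hle' := hle.ge.trans (lintegral_union_le (fun p => ENNReal.ofReal p.1 * k p) _ _)
    rw [top_le_iff, ENNReal.add_eq_top] at hle'
    exact hle'.resolve_right
      (hk.setLIntegral_rectangle_lt_top hα hε hμ hx (hx.trans hxc).le).ne
  have hnull : μ (Iio c) = 0 := by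
    refine measure_mono_null (fun x hx => ?_) (ae_iff.1 (hpos.and hflux))
    exact fun h => h.2 (hfluxTop x h.1 hx)
  have hzero : (μ.prod μ) (Iio c ×ˢ Ioi c) = 0 := by rw [Measure.prod_prod, hnull, zero_mul]
  rw [setLIntegral_measure_zero _ _ hzero] at htop
  exact ENNReal.zero_ne_top htop

-- On each piece only the coordinate that lies below `R` is kept as a weight; the other
-- one is paid for by the length of the interval.
lemma flux_integrand_le (hk : ∀ p, k p.swap = k p) {r R : ℝ} (hr : 0 < r) (p : ℝ × ℝ) :
    ENNReal.ofReal p.1 * k p * volume (Ioo p.1 (p.1 + p.2) ∩ Ioo r R) ≤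
      ENNReal.ofReal R * ((Iio (r / 2) ×ˢ Ioi (r / 2)).indicator
          (fun p => ENNReal.ofReal p.1 * k p) p +
        (Iio (r / 2) ×ˢ Ioi (r / 2)).indicator (fun p => ENNReal.ofReal p.1 * k p) p.swap +
        (Icc (r / 2) R ×ˢ Ici (r / 2)).indicator (fun p => ENNReal.ofReal p.1 * k p) p) := by
  rcases (Ioo p.1 (p.1 + p.2) ∩ Ioo r R).eq_empty_or_nonempty with hempty | ⟨x, hx, hxr, hxR⟩
  · simp [hempty]
  have hx₁ := hx.1
  have hx₂ := hx.2
  have hlenR : volume (Ioo p.1 (p.1 + p.2) ∩ Ioo r R) ≤ ENNReal.ofReal R := by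
    refine (measure_mono inter_subset_right).trans ?_
    rw [Real.volume_Ioo]
    exact ENNReal.ofReal_le_ofReal (by linarith)
  have hlen₂ : volume (Ioo p.1 (p.1 + p.2) ∩ Ioo r R) ≤ ENNReal.ofReal p.2 := by
    refine (measure_mono inter_subset_left).trans ?_
    rw [Real.volume_Ioo, add_sub_cancel_left]
  have hwide : ENNReal.ofReal p.1 * k p * volume (Ioo p.1 (p.1 + p.2) ∩ Ioo r R) ≤
      ENNReal.ofReal R * (ENNReal.ofReal p.1 * k p) := by
    rw [mul_comm (ENNReal.ofReal R)]; gcongr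
  rcases lt_or_ge p.1 (r / 2) with h₁ | h₁
  · rw [indicator_of_mem (show p ∈ Iio (r / 2) ×ˢ Ioi (r / 2) from
      ⟨h₁, show r / 2 < p.2 by linarith⟩)]
    refine hwide.trans ?_
    gcongr
    exact le_self_add.trans le_self_add
  rcases lt_or_ge p.2 (r / 2) with h₂ | h₂
  · rw [indicator_of_mem (show p.swap ∈ Iio (r / 2) ×ˢ Ioi (r / 2) from
      ⟨h₂, show r / 2 < p.1 by linarith⟩)]
    calc ENNReal.ofReal p.1 * k p * volume (Ioo p.1 (p.1 + p.2) ∩ Ioo r R)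
        ≤ ENNReal.ofReal R * k p * ENNReal.ofReal p.2 := by gcongr; linarith
      _ = ENNReal.ofReal R * (ENNReal.ofReal p.swap.1 * k p.swap) := by
          rw [hk, Prod.fst_swap]; ring
      _ ≤ _ := by gcongr; exact le_add_self.trans le_self_add
  · rw [indicator_of_mem (show p ∈ Icc (r / 2) R ×ˢ Ici (r / 2) from ⟨⟨h₁, by linarith⟩, h₂⟩)]
    refine hwide.trans ?_
    gcongr
    exact le_add_self

lemma IsNearTwo.setLIntegral_Ioo_massFlux_lt_top (hk : IsNearTwo α ε k) (hα : α ∈ Icc 0 1)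
    (hε : 0 ≤ ε) (hpos : ∀ᵐ x ∂μ, 0 < x) (hμ : ∫⁻ x, ENNReal.ofReal x ∂μ = 1)
    (hflux : ∀ᵐ x ∂μ, massFlux k μ x ≠ ∞) {r R : ℝ} (hr : 0 < r) (hR : 0 ≤ R) :
    ∫⁻ x in Ioo r R, massFlux k μ x < ∞ := by
  have hkm := hk.measurable
  have hm : Measurable fun p : ℝ × ℝ => ENNReal.ofReal p.1 * k p := by fun_prop
  have hlow : MeasurableSet (Iio (r / 2) ×ˢ Ioi (r / 2)) := measurableSet_Iio.prod measurableSet_Ioi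
  have hmid : MeasurableSet (Icc (r / 2) R ×ˢ Ici (r / 2)) :=
    measurableSet_Icc.prod measurableSet_Ici
  set F := (Iio (r / 2) ×ˢ Ioi (r / 2)).indicator fun p : ℝ × ℝ => ENNReal.ofReal p.1 * k p
    with hF
  set H := (Icc (r / 2) R ×ˢ Ici (r / 2)).indicator fun p : ℝ × ℝ => ENNReal.ofReal p.1 * k p
    with hH
  have hFm : Measurable F := hm.indicator hlow
  have hHm : Measurable H := hm.indicator hmid
  have hF_lt : ∫⁻ p, F p ∂μ.prod μ < ∞ := by
    rw [hF, lintegral_indicator hlow]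
    exact hk.setLIntegral_Iio_prod_Ioi_lt_top hα hε hpos hμ hflux (r / 2)
  have hH_lt : ∫⁻ p, H p ∂μ.prod μ < ∞ := by
    rw [hH, lintegral_indicator hmid]
    exact hk.setLIntegral_rectangle_lt_top hα hε hμ (half_pos hr) hR
  calc ∫⁻ x in Ioo r R, massFlux k μ x
      ≤ ∫⁻ p, ENNReal.ofReal R * (F p + F p.swap + H p) ∂μ.prod μ := by
        rw [setLIntegral_massFlux hkm measurableSet_Ioo fun x hx => hr.trans hx.1]
        exact lintegral_mono (flux_integrand_le hk.swap hr)
    _ = ENNReal.ofReal R * (∫⁻ p, F p ∂μ.prod μ + ∫⁻ p, F p ∂μ.prod μ + ∫⁻ p, H p ∂μ.prod μ) := by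
        rw [lintegral_const_mul _ (by fun_prop), lintegral_add_right _ hHm,
          lintegral_add_left hFm, lintegral_prod_swap]
    _ < ∞ := ENNReal.mul_lt_top ENNReal.ofReal_lt_top
        (ENNReal.add_lt_top.2 ⟨ENNReal.add_lt_top.2 ⟨hF_lt, hF_lt⟩, hH_lt⟩)

lemma Ioi_zero_eq_iUnion_Ioo : Ioi (0 : ℝ) = ⋃ n : ℕ, Ioo (1 / ((n : ℝ) + 1)) n := by
  ext x
  simp only [mem_Ioi, mem_iUnion, mem_Ioo]
  refine ⟨fun hx => ?_, fun ⟨n, hn, _⟩ => lt_trans (by positivity) hn⟩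
  obtain ⟨m, hm⟩ := exists_nat_one_div_lt hx
  obtain ⟨n, hn⟩ := exists_nat_gt x
  refine ⟨max m n, (one_div_le_one_div_of_le (by positivity) ?_).trans_lt hm,
    hn.trans_le (by exact_mod_cast le_max_right m n)⟩
  gcongr
  exact le_max_left m n

lemma IsNearTwo.ae_massFlux_ne_top (hk : IsNearTwo α ε k) (hα : α ∈ Icc 0 1) (hε : 0 ≤ ε)
    (hpos : ∀ᵐ x ∂μ, 0 < x) (hμ : ∫⁻ x, ENNReal.ofReal x ∂μ = 1)
    (hflux : ∀ᵐ x ∂μ, massFlux k μ x ≠ ∞) :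
    ∀ᵐ x ∂volume.restrict (Ioi 0), massFlux k μ x ≠ ∞ := by
  rw [Ioi_zero_eq_iUnion_Ioo, ae_restrict_iUnion_iff]
  refine fun n => (ae_lt_top (measurable_massFlux hk.measurable) ?_).mono fun x hx => hx.ne
  exact (hk.setLIntegral_Ioo_massFlux_lt_top hα hε hpos hμ hflux (by positivity)
    (by positivity)).ne

end Finiteness

section RealProfile

/-- The measure on `(0, ∞)` with density `φ`. -/
noncomputable def profileMeasure (φ : ℝ → ℝ) : Measure ℝ :=
  (volume.restrict (Ioi 0)).withDensity fun x => ENNReal.ofReal (φ x)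

/-- The restriction of a real kernel to the open quadrant, as an `ℝ≥0∞`-valued function. -/
noncomputable def quadrantKernel (K : ℝ → ℝ → ℝ) : ℝ × ℝ → ℝ≥0∞ :=
  (Ioi 0 ×ˢ Ioi 0).indicator fun p => ENNReal.ofReal (K p.1 p.2)

variable {K : ℝ → ℝ → ℝ} {φ : ℝ → ℝ}

lemma quadrantKernel_apply {y z : ℝ} (hy : 0 < y) (hz : 0 < z) :
    quadrantKernel K (y, z) = ENNReal.ofReal (K y z) :=
  indicator_of_mem (show (y, z) ∈ Ioi (0 : ℝ) ×ˢ Ioi (0 : ℝ) from ⟨hy, hz⟩) _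

lemma isNearTwo_quadrantKernel
    (hK : Measurable ((Ioi 0 ×ˢ Ioi 0).indicator fun p : ℝ × ℝ => K p.1 p.2))
    (hsymm : ∀ x y, 0 < x → 0 < y → K x y = K y x)
    (hbound : ∀ x y, 0 < x → 0 < y → K x y ∈ Icc 2 (2 + ε * ((x / y) ^ α + (y / x) ^ α))) :
    IsNearTwo α ε (quadrantKernel K) where
  measurable := by
    convert hK.ennreal_ofReal using 1
    exact indicator_comp_of_zero (g := ENNReal.ofReal) ENNReal.ofReal_zero
  swap p := by
    by_cases hp : p ∈ Ioi (0 : ℝ) ×ˢ Ioi (0 : ℝ)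
    · exact (quadrantKernel_apply hp.2 hp.1).trans <|
        (congrArg ENNReal.ofReal (hsymm _ _ hp.2 hp.1)).trans (quadrantKernel_apply hp.1 hp.2).symm
    · exact (indicator_of_notMem (fun h => hp h.symm) _).trans (indicator_of_notMem hp _).symm
  two_le p hp₁ hp₂ := by
    rw [quadrantKernel_apply hp₁ hp₂, ← ENNReal.ofReal_ofNat 2]
    exact ENNReal.ofReal_le_ofReal (hbound _ _ hp₁ hp₂).1
  le p hp₁ hp₂ := by
    rw [quadrantKernel_apply hp₁ hp₂]
    refine (ENNReal.ofReal_le_ofReal (hbound _ _ hp₁ hp₂).2).trans ?_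
    exact ENNReal.ofReal_add_le.trans_eq (by rw [ENNReal.ofReal_ofNat])

instance : SFinite (profileMeasure φ) := by
  unfold profileMeasure
  infer_instance

lemma ae_profileMeasure_pos : ∀ᵐ x ∂profileMeasure φ, 0 < x :=
  (withDensity_absolutelyContinuous _ _).ae_le (ae_restrict_mem measurableSet_Ioi)

lemma setIntegral_profileMeasure (hm : AEMeasurable φ (volume.restrict (Ioi 0)))
    (hφ : ∀ᵐ x ∂volume.restrict (Ioi (0 : ℝ)), 0 ≤ φ x) {s : Set ℝ} (hs : MeasurableSet s)
    (g : ℝ → ℝ) :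
    ∫ x in s, g x ∂profileMeasure φ = ∫ x in s ∩ Ioi 0, φ x * g x := by
  rw [profileMeasure, setIntegral_withDensity_eq_setIntegral_toReal_smul₀
    hm.ennreal_ofReal.restrict (ae_of_all _ fun x => ENNReal.ofReal_lt_top) _ hs,
    Measure.restrict_restrict hs]
  refine integral_congr_ae ?_
  filter_upwards [ae_restrict_of_ae_restrict_of_subset inter_subset_right hφ] with x hx
  rw [ENNReal.toReal_ofReal hx, smul_eq_mul]

lemma lintegral_profileMeasure (hm : AEMeasurable φ (volume.restrict (Ioi 0))) {h : ℝ → ℝ≥0∞}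
    (hh : Measurable h) :
    ∫⁻ x, h x ∂profileMeasure φ = ∫⁻ x in Ioi 0, ENNReal.ofReal (φ x) * h x :=
  lintegral_withDensity_eq_lintegral_mul₀ hm.ennreal_ofReal hh.aemeasurable

lemma measurable_setLIntegral_Ioi_sub [SFinite μ] {f : ℝ × ℝ → ℝ≥0∞} (hf : Measurable f) (x : ℝ) :
    Measurable fun y => ∫⁻ z in Ioi (x - y), f (y, z) ∂μ := by
  have hs : MeasurableSet {p : ℝ × ℝ | x - p.1 < p.2} :=
    measurableSet_lt (by fun_prop) (by fun_prop)
  convert (hf.indicator hs).lintegral_prod_right' (ν := μ) using 2 with y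
  exact (lintegral_indicator measurableSet_Ioi _).symm

lemma IsNearTwo.setLIntegral_Ioi_lt_top (hk : IsNearTwo α ε k) (hα : α ∈ Icc 0 1) (hε : 0 ≤ ε)
    (hμ : ∫⁻ x, ENNReal.ofReal x ∂μ = 1) {y r : ℝ} (hy : 0 < y) (hr : 0 < r) :
    ∫⁻ z in Ioi r, ENNReal.ofReal y * k (y, z) ∂μ < ∞ := by
  obtain ⟨C, hC, hle⟩ := hk.exists_le_mul_snd hα hε (lt_min hy hr) hy.le
  calc ∫⁻ z in Ioi r, ENNReal.ofReal y * k (y, z) ∂μ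
      ≤ ∫⁻ z in Ioi r, ENNReal.ofReal (y * C) * ENNReal.ofReal z ∂μ := by
        refine setLIntegral_mono (by fun_prop) fun z hz => ?_
        rw [← ENNReal.ofReal_mul (by positivity), mul_assoc, ENNReal.ofReal_mul hy.le]
        gcongr
        have hrz : min y r ≤ z := (min_le_right _ _).trans (le_of_lt hz)
        exact hle (y, z) ⟨⟨min_le_left _ _, le_rfl⟩, hrz⟩
    _ ≤ ∫⁻ z, ENNReal.ofReal (y * C) * ENNReal.ofReal z ∂μ := setLIntegral_le_lintegral _ _
    _ < ∞ := by
        rw [lintegral_const_mul _ (by fun_prop), hμ, mul_one]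
        exact ENNReal.ofReal_lt_top

-- Both sides vanish when the flux is infinite, by the convention for Bochner integrals.
lemma IsNearTwo.toReal_massFlux (hk : IsNearTwo α ε (quadrantKernel K)) (hα : α ∈ Icc 0 1)
    (hε : 0 ≤ ε) (hm : AEMeasurable φ (volume.restrict (Ioi 0)))
    (hφ : ∀ᵐ x ∂volume.restrict (Ioi (0 : ℝ)), 0 ≤ φ x)
    (hμ : ∫⁻ x, ENNReal.ofReal x ∂profileMeasure φ = 1) (x : ℝ) :
    (massFlux (quadrantKernel K) (profileMeasure φ) x).toReal =
      ∫ y in Ioo 0 x, ∫ z in Ioi (x - y), y * K y z * φ y * φ z := by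
  have hkm := hk.measurable
  have hKpos {y z : ℝ} (hy : 0 < y) (hz : 0 < z) : 0 ≤ K y z := by
    have h := hk.two_le (y, z) hy hz
    rw [quadrantKernel_apply hy hz] at h
    exact (ENNReal.ofReal_pos.1 (two_pos.trans_le h)).le
  have hinner {y : ℝ} (hy : y ∈ Ioo 0 x) :
      (∫⁻ z in Ioi (x - y), ENNReal.ofReal y * quadrantKernel K (y, z) ∂profileMeasure φ).toReal =
        ∫ z in Ioi (x - y), φ z * (y * K y z) := by
    have hxy : 0 < x - y := sub_pos.2 hy.2
    rw [← integral_toReal (by fun_prop)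
      (ae_lt_top (by fun_prop) (hk.setLIntegral_Ioi_lt_top hα hε hμ hy.1 hxy).ne),
      setIntegral_profileMeasure hm hφ measurableSet_Ioi,
      inter_eq_left.2 (Ioi_subset_Ioi hxy.le)]
    refine setIntegral_congr_fun measurableSet_Ioi fun z hz => ?_
    have hz₀ : 0 < z := hxy.trans hz
    simp only [quadrantKernel_apply hy.1 hz₀, ENNReal.toReal_mul, ENNReal.toReal_ofReal hy.1.le,
      ENNReal.toReal_ofReal (hKpos hy.1 hz₀)]
  have hfinite : ∀ᵐ y ∂(profileMeasure φ).restrict (Iio x), ∫⁻ z in Ioi (x - y),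
      ENNReal.ofReal y * quadrantKernel K (y, z) ∂profileMeasure φ < ∞ := by
    filter_upwards [ae_restrict_mem measurableSet_Iio, ae_restrict_of_ae ae_profileMeasure_pos]
      with y hyx hy
    exact hk.setLIntegral_Ioi_lt_top hα hε hμ hy (sub_pos.2 hyx)
  rw [massFlux_eq_lintegral_lintegral hkm, ← integral_toReal
    (measurable_setLIntegral_Ioi_sub (f := fun p => ENNReal.ofReal p.1 * quadrantKernel K p)
      (by fun_prop) x).aemeasurable hfinite,
    setIntegral_profileMeasure hm hφ measurableSet_Iio, inter_comm, Ioi_inter_Iio]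
  refine setIntegral_congr_fun measurableSet_Ioo fun y hy => ?_
  simp only [hinner hy, ← integral_const_mul]
  exact integral_congr_ae (ae_of_all _ fun z => by ring)

lemma lintegral_id_profileMeasure (hprof : IsProfile K φ) (hnorm : IsNormalised φ) :
    ∫⁻ x, ENNReal.ofReal x ∂profileMeasure φ = 1 := by
  obtain ⟨hloc, hφ, hint, -⟩ := hprof
  rw [lintegral_profileMeasure hloc.aestronglyMeasurable.aemeasurable ENNReal.measurable_ofReal]
  calc ∫⁻ x in Ioi 0, ENNReal.ofReal (φ x) * ENNReal.ofReal x
      = ∫⁻ x in Ioi 0, ENNReal.ofReal (x * φ x) :=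
        setLIntegral_congr_fun measurableSet_Ioi fun x hx => by
          rw [ENNReal.ofReal_mul (le_of_lt hx), mul_comm]
    _ = ENNReal.ofReal (∫ x in Ioi 0, x * φ x) := by
        refine (ofReal_integral_eq_lintegral_ofReal hint ?_).symm
        filter_upwards [hφ, ae_restrict_mem measurableSet_Ioi] with x hx hx₀
        exact mul_nonneg (le_of_lt hx₀) hx
    _ = 1 := by rw [hnorm, ENNReal.ofReal_one]

theorem IsProfile.ofReal_sq_mul_eq_massFlux (hprof : IsProfile K φ) (hnorm : IsNormalised φ)
    (hk : IsNearTwo α ε (quadrantKernel K)) (hα : α ∈ Icc 0 1) (hε : 0 ≤ ε) :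
    ∀ᵐ x ∂volume.restrict (Ioi 0), ENNReal.ofReal (x ^ 2 * φ x) =
      massFlux (quadrantKernel K) (profileMeasure φ) x := by
  have hμ := lintegral_id_profileMeasure hprof hnorm
  obtain ⟨hloc, hφ, -, heq⟩ := hprof
  have hm := hloc.aestronglyMeasurable.aemeasurable
  have htoReal : ∀ᵐ x ∂volume.restrict (Ioi 0), x ^ 2 * φ x =
      (massFlux (quadrantKernel K) (profileMeasure φ) x).toReal := by
    filter_upwards [heq] with x hx
    rw [hx, hk.toReal_massFlux hα hε hm hφ hμ]
  have hflux : ∀ᵐ x ∂profileMeasure φ,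
      massFlux (quadrantKernel K) (profileMeasure φ) x ≠ ∞ := by
    refine (ae_withDensity_iff' hm.ennreal_ofReal).2 ?_
    filter_upwards [htoReal, ae_restrict_mem measurableSet_Ioi] with x hx hx₀ hne htop
    rw [htop, ENNReal.toReal_top, mul_eq_zero, pow_eq_zero_iff two_ne_zero] at hx
    exact hne (by rw [hx.resolve_left (ne_of_gt hx₀), ENNReal.ofReal_zero])
  filter_upwards [htoReal, hk.ae_massFlux_ne_top hα hε ae_profileMeasure_pos hμ hflux]
    with x hx hfin
  rw [hx, ENNReal.ofReal_toReal hfin]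

theorem IsProfile.isMeasureProfile (hprof : IsProfile K φ) (hnorm : IsNormalised φ)
    (hk : IsNearTwo α ε (quadrantKernel K)) (hα : α ∈ Icc 0 1) (hε : 0 ≤ ε) :
    IsMeasureProfile (quadrantKernel K) (profileMeasure φ) where
  ae_pos := ae_profileMeasure_pos
  lintegral_id := lintegral_id_profileMeasure hprof hnorm
  withDensity_sq := by
    have hm := hprof.1.aestronglyMeasurable.aemeasurable
    rw [profileMeasure, ← withDensity_mul₀ hm.ennreal_ofReal (by fun_prop)]
    refine withDensity_congr_ae ?_
    filter_upwards [hprof.ofReal_sq_mul_eq_massFlux hnorm hk hα hε] with x hx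
    rw [Pi.mul_apply, mul_comm, ← ENNReal.ofReal_mul (sq_nonneg x), hx]
    rfl

end RealProfile

section Laplace

/-- The moment `∫ x ^ s dμ` of real order `s`, for measures carried by the half-line. -/
noncomputable def rpowMoment (μ : Measure ℝ) (s : ℝ) : ℝ≥0∞ :=
  ∫⁻ x, ENNReal.ofReal (x ^ s) ∂μ

/-- The perturbing part `(y / z) ^ α + (z / y) ^ α` of the largest admissible kernel. -/
noncomputable def ratioKernel (α : ℝ) (p : ℝ × ℝ) : ℝ≥0∞ :=
  ENNReal.ofReal ((p.1 / p.2) ^ α + (p.2 / p.1) ^ α)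

/-- The desingularised Laplace transform `∫ (1 - e ^ (-p x)) dμ`, which needs only a finite first
moment. -/
noncomputable def desingLaplace (μ : Measure ℝ) (p : ℝ) : ℝ :=
  ∫ x, (1 - exp (-(p * x))) ∂μ

@[fun_prop]
lemma measurable_ratioKernel : Measurable (ratioKernel α) := by
  unfold ratioKernel
  fun_prop

lemma IsNearTwo.le_ratioKernel (hk : IsNearTwo α ε k) (hε : 0 ≤ ε) {p : ℝ × ℝ} (hp₁ : 0 < p.1)
    (hp₂ : 0 < p.2) : k p ≤ 2 + ENNReal.ofReal ε * ratioKernel α p := by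
  rw [ratioKernel, ← ENNReal.ofReal_mul hε]
  exact hk.le p hp₁ hp₂

lemma ratioKernel_mul {p : ℝ × ℝ} (hp₁ : 0 < p.1) (hp₂ : 0 < p.2) :
    ratioKernel α p * (ENNReal.ofReal p.1 * ENNReal.ofReal p.2) =
      ENNReal.ofReal (p.1 ^ (1 + α)) * ENNReal.ofReal (p.2 ^ (1 - α)) +
        ENNReal.ofReal (p.1 ^ (1 - α)) * ENNReal.ofReal (p.2 ^ (1 + α)) := by
  rw [ratioKernel, ← ENNReal.ofReal_mul hp₁.le, ← ENNReal.ofReal_mul (by positivity),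
    ← ENNReal.ofReal_mul (by positivity), ← ENNReal.ofReal_mul (by positivity),
    ← ENNReal.ofReal_add (by positivity) (by positivity), div_rpow hp₁.le hp₂.le,
    div_rpow hp₂.le hp₁.le, rpow_add hp₁, rpow_sub hp₂, rpow_sub hp₁, rpow_add hp₂, rpow_one,
    rpow_one]
  congr 1
  field_simp

lemma lintegral_rpow_mul_rpow [SFinite μ] (s t : ℝ) :
    ∫⁻ p : ℝ × ℝ, ENNReal.ofReal (p.1 ^ s) * ENNReal.ofReal (p.2 ^ t) ∂μ.prod μ =
      rpowMoment μ s * rpowMoment μ t :=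
  lintegral_prod_mul (f := fun x => ENNReal.ofReal (x ^ s)) (g := fun x => ENNReal.ofReal (x ^ t))
    (by fun_prop) (by fun_prop)

lemma lintegral_ratioKernel_mul [SFinite μ] (hμ : ∀ᵐ x ∂μ, 0 < x) :
    ∫⁻ p : ℝ × ℝ, ratioKernel α p * (ENNReal.ofReal p.1 * ENNReal.ofReal p.2) ∂μ.prod μ =
      2 * (rpowMoment μ (1 + α) * rpowMoment μ (1 - α)) := by
  rw [lintegral_congr_ae ((ae_prod_pos hμ).mono fun p hp => ratioKernel_mul hp.1 hp.2),
    lintegral_add_left (by fun_prop), lintegral_rpow_mul_rpow, lintegral_rpow_mul_rpow]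
  ring

lemma setLIntegral_Ioo_ofReal_eq_sub {F f : ℝ → ℝ} {a b : ℝ} (hab : a ≤ b)
    (hderiv : ∀ x ∈ Icc a b, HasDerivAt F (f x) x) (hcont : ContinuousOn f (Icc a b))
    (hf : ∀ x ∈ Icc a b, 0 ≤ f x) :
    ∫⁻ x in Ioo a b, ENNReal.ofReal (f x) = ENNReal.ofReal (F b - F a) := by
  rw [← uIcc_of_le hab] at hderiv
  rw [← intervalIntegral.integral_eq_sub_of_hasDerivAt hderiv
    (ContinuousOn.intervalIntegrable (by rwa [uIcc_of_le hab])),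
    intervalIntegral.integral_of_le hab, integral_Ioc_eq_integral_Ioo]
  refine (ofReal_integral_eq_lintegral_ofReal
    (hcont.integrableOn_Icc.mono_set Ioo_subset_Icc_self) ?_).symm
  exact (ae_restrict_mem measurableSet_Ioo).mono fun x hx => hf x (Ioo_subset_Icc_self hx)

lemma one_add_mul_exp_neg_le_one (t : ℝ) : (1 + t) * exp (-t) ≤ 1 :=
  calc (1 + t) * exp (-t) ≤ exp t * exp (-t) := by
        gcongr; linarith [add_one_le_exp t]
    _ = 1 := by rw [← exp_add, add_neg_cancel, exp_zero]

lemma one_sub_exp_neg_nonneg {p y : ℝ} (hp : 0 ≤ p) (hy : 0 ≤ y) : 0 ≤ 1 - exp (-(p * y)) :=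
  sub_nonneg.2 (exp_le_one_iff.2 (neg_nonpos.2 (mul_nonneg hp hy)))

lemma one_sub_exp_neg_le (t : ℝ) : 1 - exp (-t) ≤ t := by
  linarith [add_one_le_exp (-t)]

lemma hasDerivAt_neg_one_sub_exp_div (p : ℝ) {x : ℝ} (hx : 0 < x) :
    HasDerivAt (fun x => -((1 - exp (-(p * x))) / x)) ((1 - (1 + p * x) * exp (-(p * x))) / x ^ 2)
      x := by
  have hexp : HasDerivAt (fun x => 1 - exp (-(p * x))) (p * exp (-(p * x))) x :=
    ((((hasDerivAt_id' x).const_mul p).fun_neg.exp).const_sub 1).congr_deriv (by ring)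
  exact (hexp.fun_div (hasDerivAt_id' x) hx.ne').fun_neg.congr_deriv (by field_simp; ring)

lemma ofReal_mul_setLIntegral_Ioo_laplaceTest (p : ℝ) {y z : ℝ} (hy : 0 < y) (hz : 0 < z) :
    ENNReal.ofReal y * ∫⁻ x in Ioo y (y + z),
        ENNReal.ofReal ((1 - (1 + p * x) * exp (-(p * x))) / x ^ 2) =
      ENNReal.ofReal (1 - exp (-(p * y)) - y / (y + z) * (1 - exp (-(p * (y + z))))) := by
  have hpos : ∀ x ∈ Icc y (y + z), 0 < x := fun x hx => hy.trans_le hx.1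
  rw [setLIntegral_Ioo_ofReal_eq_sub (by linarith)
    (fun x hx => hasDerivAt_neg_one_sub_exp_div p (hpos x hx))
    (ContinuousOn.div (by fun_prop) (by fun_prop) fun x hx => (pow_pos (hpos x hx) 2).ne')
    fun x _ => div_nonneg (sub_nonneg.2 (one_add_mul_exp_neg_le_one _)) (sq_nonneg x),
    ← ENNReal.ofReal_mul hy.le]
  congr 1
  field_simp
  ring

lemma one_sub_exp_sub_nonneg (p : ℝ) {y z : ℝ} (hy : 0 < y) (hz : 0 < z) :
    0 ≤ 1 - exp (-(p * y)) - y / (y + z) * (1 - exp (-(p * (y + z)))) := by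
  have hconv := convexOn_exp.2 (mem_univ (-(p * (y + z)))) (mem_univ 0)
    (show 0 ≤ y / (y + z) by positivity) (show 0 ≤ z / (y + z) by positivity) (by field_simp)
  have hpt : y / (y + z) * -(p * (y + z)) = -(p * y) := by field_simp
  have hsum : z / (y + z) = 1 - y / (y + z) := by field_simp; ring
  simp only [smul_eq_mul, mul_zero, add_zero, hpt, exp_zero, mul_one, hsum] at hconv
  linarith

-- The test function `(1 - (1 + p x) e ^ (-p x)) / x ^ 2` integrates to `-(1 - e ^ (-p x)) / x`;
-- symmetrising the right-hand side in `y` and `z` then makes it factor.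
theorem IsMeasureProfile.laplace_identity [SFinite μ] (hμ : IsMeasureProfile k μ)
    (hk : Measurable k) (hswap : ∀ p, k p.swap = k p) {p : ℝ} (hp : 0 ≤ p) :
    2 * ∫⁻ x, ENNReal.ofReal (1 - (1 + p * x) * exp (-(p * x))) ∂μ =
      ∫⁻ q : ℝ × ℝ, k q * (ENNReal.ofReal (1 - exp (-(p * q.1))) *
        ENNReal.ofReal (1 - exp (-(p * q.2)))) ∂μ.prod μ := by
  let D : ℝ × ℝ → ℝ := fun q =>
    1 - exp (-(p * q.1)) - q.1 / (q.1 + q.2) * (1 - exp (-(p * (q.1 + q.2))))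
  have hDm : Measurable D := by fun_prop
  have htest : ∫⁻ x, ENNReal.ofReal (1 - (1 + p * x) * exp (-(p * x))) ∂μ =
      ∫⁻ q, k q * ENNReal.ofReal (D q) ∂μ.prod μ := by
    trans ∫⁻ x, ENNReal.ofReal (x ^ 2) *
      ENNReal.ofReal ((1 - (1 + p * x) * exp (-(p * x))) / x ^ 2) ∂μ
    · refine lintegral_congr_ae ?_
      filter_upwards [hμ.ae_pos] with x hx
      rw [← ENNReal.ofReal_mul (sq_nonneg x), mul_div_cancel₀ _ (pow_pos hx 2).ne']
    · rw [hμ.lintegral_sq_mul hk (by fun_prop)]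
      refine lintegral_congr_ae ?_
      filter_upwards [ae_prod_pos hμ.ae_pos] with q hq
      rw [mul_comm (ENNReal.ofReal q.1), mul_assoc,
        ofReal_mul_setLIntegral_Ioo_laplaceTest p hq.1 hq.2]
  have hswapped : ∫⁻ q, k q * ENNReal.ofReal (D q) ∂μ.prod μ =
      ∫⁻ q, k q * ENNReal.ofReal (D q.swap) ∂μ.prod μ := by
    rw [← lintegral_prod_swap]
    simp only [hswap]
  rw [two_mul, htest]
  nth_rewrite 2 [hswapped]
  rw [← lintegral_add_left (by fun_prop)]
  refine lintegral_congr_ae ?_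
  filter_upwards [ae_prod_pos hμ.ae_pos] with q ⟨hq₁, hq₂⟩
  have hD : D q + D q.swap = (1 - exp (-(p * q.1))) * (1 - exp (-(p * q.2))) := by
    have hexp : exp (-(p * (q.1 + q.2))) = exp (-(p * q.1)) * exp (-(p * q.2)) := by
      rw [← exp_add]; ring_nf
    simp only [D, Prod.fst_swap, Prod.snd_swap, add_comm q.2 q.1, hexp]
    field_simp
    ring
  have hadd : ENNReal.ofReal (D q) + ENNReal.ofReal (D q.swap) =
      ENNReal.ofReal (D q + D q.swap) :=
    (ENNReal.ofReal_add (one_sub_exp_sub_nonneg p hq₁ hq₂)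
      (one_sub_exp_sub_nonneg p hq₂ hq₁)).symm
  rw [← mul_add, hadd, hD, ENNReal.ofReal_mul (one_sub_exp_neg_nonneg hp hq₁.le)]

end Laplace

section Riccati

lemma le_of_hasDerivAt_nonpos_of_tendsto {v v' : ℝ → ℝ} {c : ℝ}
    (hderiv : ∀ p, 0 < p → HasDerivAt v (v' p) p) (hv' : ∀ p, 0 < p → v' p ≤ 0)
    (hlim : Tendsto v (𝓝[>] 0) (𝓝 c)) {p : ℝ} (hp : 0 < p) : v p ≤ c := by
  have hanti : AntitoneOn v (Ioi 0) := by
    refine antitoneOn_of_deriv_nonpos (convex_Ioi 0)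
      (fun q hq => (hderiv q hq).continuousAt.continuousWithinAt) ?_ ?_ <;> rw [interior_Ioi]
    · exact fun q hq => (hderiv q hq).differentiableAt.differentiableWithinAt
    · exact fun q hq => (hderiv q hq).deriv.trans_le (hv' q hq)
  refine ge_of_tendsto hlim ?_
  filter_upwards [Ioo_mem_nhdsGT hp] with q hq
  exact hanti hq.1 hp hq.2.le

variable {Q Q' : ℝ → ℝ}

lemma hasDerivAt_div_id {p : ℝ} (hp : 0 < p) (hQ : HasDerivAt Q (Q' p) p) :
    HasDerivAt (fun p => Q p / p) (-(Q p - p * Q' p) / p ^ 2) p :=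
  (hQ.fun_div (hasDerivAt_id' p) hp.ne').congr_deriv (by ring)

-- For `R = Q / p`, the derivative of `(1 + p) ^ 2 R - p` is at most `-((1 + p) R - 1) ^ 2`.
theorem le_div_one_add_of_sq_le (hderiv : ∀ p, 0 < p → HasDerivAt Q (Q' p) p)
    (hlim : Tendsto (fun p => Q p / p) (𝓝[>] 0) (𝓝 1))
    (hsq : ∀ p, 0 < p → Q p ^ 2 ≤ Q p - p * Q' p) {p : ℝ} (hp : 0 < p) :
    Q p ≤ p / (1 + p) := by
  have hv : ∀ p, 0 < p → HasDerivAt (fun p => (1 + p) ^ 2 * (Q p / p) - p)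
      (2 * (1 + p) * (Q p / p) + (1 + p) ^ 2 * (-(Q p - p * Q' p) / p ^ 2) - 1) p := fun p hp =>
    ((((hasDerivAt_id' p).const_add 1).fun_pow 2).fun_mul
      (hasDerivAt_div_id hp (hderiv p hp)) |>.fun_sub (hasDerivAt_id' p)).congr_deriv
      (by push_cast; ring)
  have hle := le_of_hasDerivAt_nonpos_of_tendsto hv (c := 1) (fun p hp => ?_) ?_ hp
  · have hR : Q p / p ≤ 1 / (1 + p) := by
      rw [le_div_iff₀ (by positivity)]
      nlinarith
    calc Q p = p * (Q p / p) := by field_simp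
      _ ≤ p * (1 / (1 + p)) := by gcongr
      _ = p / (1 + p) := by ring
  · have hD : (Q p / p) ^ 2 ≤ (Q p - p * Q' p) / p ^ 2 := by
      rw [div_pow]
      gcongr
      exact hsq p hp
    calc 2 * (1 + p) * (Q p / p) + (1 + p) ^ 2 * (-(Q p - p * Q' p) / p ^ 2) - 1
        = 2 * (1 + p) * (Q p / p) - (1 + p) ^ 2 * ((Q p - p * Q' p) / p ^ 2) - 1 := by ring
      _ ≤ 2 * (1 + p) * (Q p / p) - (1 + p) ^ 2 * (Q p / p) ^ 2 - 1 := by gcongr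
      _ = -((1 + p) * (Q p / p) - 1) ^ 2 := by ring
      _ ≤ 0 := neg_nonpos.2 (sq_nonneg _)
  · have hid : Tendsto (fun p : ℝ => p) (𝓝[>] 0) (𝓝 0) := nhdsWithin_le_nhds
    simpa using (((hid.const_add 1).pow 2).mul hlim).sub hid

-- For `R = Q / p`, the derivative of `(1 + p) R` is at least `R (1 - (1 + p) R) - c (1 + p)`,
-- and the first term is nonnegative by the upper bound on `Q`.
theorem div_one_add_sub_le (hderiv : ∀ p, 0 < p → HasDerivAt Q (Q' p) p)
    (hlim : Tendsto (fun p => Q p / p) (𝓝[>] 0) (𝓝 1)) {c : ℝ} (hc : 0 ≤ c)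
    (hQ : ∀ p, 0 < p → 0 ≤ Q p) (hle : ∀ p, 0 < p → Q p ≤ p / (1 + p))
    (hsq : ∀ p, 0 < p → Q p - p * Q' p ≤ Q p ^ 2 + c * p ^ 2) {p : ℝ} (hp : 0 < p) :
    p / (1 + p) - c * p ^ 2 ≤ Q p := by
  have hv : ∀ p, 0 < p → HasDerivAt (fun p => -((1 + p) * (Q p / p)) - c * (1 + p) ^ 2 / 2)
      (-(Q p / p + (1 + p) * (-(Q p - p * Q' p) / p ^ 2)) - c * (1 + p)) p := fun p hp =>
    ((((hasDerivAt_id' p).const_add 1).fun_mul (hasDerivAt_div_id hp (hderiv p hp))).fun_neg.fun_sub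
      (((((hasDerivAt_id' p).const_add 1).fun_pow 2).const_mul c).div_const 2)).congr_deriv
      (by push_cast; ring)
  have hkey := le_of_hasDerivAt_nonpos_of_tendsto hv (c := -1 - c / 2) (fun p hp => ?_) ?_ hp
  · have hR : 1 - c * p * (2 + p) / 2 ≤ (1 + p) * (Q p / p) := by linarith
    have hcoef : p / (1 + p) * ((2 + p) / 2) ≤ p := by
      rw [div_mul_div_comm, div_le_iff₀ (by positivity)]
      nlinarith
    calc p / (1 + p) - c * p ^ 2
        = p / (1 + p) - c * p * p := by ring
      _ ≤ p / (1 + p) - c * p * (p / (1 + p) * ((2 + p) / 2)) := by gcongr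
      _ = p / (1 + p) * (1 - c * p * (2 + p) / 2) := by ring
      _ ≤ p / (1 + p) * ((1 + p) * (Q p / p)) := by gcongr
      _ = Q p := by field_simp
  · have hD : (Q p - p * Q' p) / p ^ 2 ≤ (Q p / p) ^ 2 + c := by
      rw [div_pow, div_add' _ _ _ (by positivity)]
      gcongr
      exact hsq p hp
    have hR : (1 + p) * (Q p / p) ≤ 1 := by
      have := hle p hp
      rw [le_div_iff₀ (by positivity)] at this
      rw [← mul_div_assoc, div_le_one hp]
      linarith
    calc -(Q p / p + (1 + p) * (-(Q p - p * Q' p) / p ^ 2)) - c * (1 + p)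
        = -(Q p / p) + (1 + p) * ((Q p - p * Q' p) / p ^ 2) - c * (1 + p) := by ring
      _ ≤ -(Q p / p) + (1 + p) * ((Q p / p) ^ 2 + c) - c * (1 + p) := by gcongr
      _ = -(Q p / p * (1 - (1 + p) * (Q p / p))) := by ring
      _ ≤ 0 := neg_nonpos.2 (mul_nonneg (div_nonneg (hQ p hp) hp.le) (sub_nonneg.2 hR))
  · have hid : Tendsto (fun p : ℝ => p) (𝓝[>] 0) (𝓝 0) := nhdsWithin_le_nhds
    simpa using ((hid.const_add 1).mul hlim).neg.sub
      ((((hid.const_add 1).pow 2).const_mul c).div_const 2)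

end Riccati

section LaplaceBounds

/-- The Laplace transform `∫ x e ^ (-p x) dμ` of the mass distribution, which is the derivative of
`desingLaplace μ`. -/
noncomputable def laplaceMass (μ : Measure ℝ) (p : ℝ) : ℝ :=
  ∫ x, x * exp (-(p * x)) ∂μ

lemma mul_exp_neg_mem_Icc {p x : ℝ} (hp : 0 ≤ p) (hx : 0 ≤ x) :
    x * exp (-(p * x)) ∈ Icc 0 x :=
  ⟨mul_nonneg hx (exp_nonneg _), mul_le_of_le_one_right hx
    (exp_le_one_iff.2 (neg_nonpos.2 (mul_nonneg hp hx)))⟩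

lemma integrable_mul_exp_neg (hpos : ∀ᵐ x ∂μ, 0 < x) (hint : Integrable (fun x => x) μ) {p : ℝ}
    (hp : 0 ≤ p) : Integrable (fun x => x * exp (-(p * x))) μ := by
  refine hint.mono' (by fun_prop) (hpos.mono fun x hx => ?_)
  have hmem := mul_exp_neg_mem_Icc hp hx.le
  exact (norm_of_nonneg hmem.1).trans_le hmem.2

lemma integrable_one_sub_exp_neg (hpos : ∀ᵐ x ∂μ, 0 < x) (hint : Integrable (fun x => x) μ) {p : ℝ}
    (hp : 0 ≤ p) : Integrable (fun x => 1 - exp (-(p * x))) μ := by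
  refine (hint.const_mul p).mono' (by fun_prop) (hpos.mono fun x hx => ?_)
  rw [norm_of_nonneg (one_sub_exp_neg_nonneg hp hx.le)]
  exact one_sub_exp_neg_le _

lemma desingLaplace_nonneg (hpos : ∀ᵐ x ∂μ, 0 < x) {p : ℝ} (hp : 0 ≤ p) :
    0 ≤ desingLaplace μ p :=
  integral_nonneg_of_ae (hpos.mono fun _ hx => one_sub_exp_neg_nonneg hp hx.le)

lemma lintegral_one_sub_exp_neg (hpos : ∀ᵐ x ∂μ, 0 < x) (hint : Integrable (fun x => x) μ) {p : ℝ}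
    (hp : 0 ≤ p) :
    ∫⁻ x, ENNReal.ofReal (1 - exp (-(p * x))) ∂μ = ENNReal.ofReal (desingLaplace μ p) :=
  (ofReal_integral_eq_lintegral_ofReal (integrable_one_sub_exp_neg hpos hint hp)
    (hpos.mono fun _ hx => one_sub_exp_neg_nonneg hp hx.le)).symm

lemma lintegral_one_sub_one_add_mul_exp_neg (hpos : ∀ᵐ x ∂μ, 0 < x)
    (hint : Integrable (fun x => x) μ) {p : ℝ} (hp : 0 ≤ p) :
    ∫⁻ x, ENNReal.ofReal (1 - (1 + p * x) * exp (-(p * x))) ∂μ =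
      ENNReal.ofReal (desingLaplace μ p - p * laplaceMass μ p) := by
  have hQ := integrable_one_sub_exp_neg hpos hint hp
  have hP := (integrable_mul_exp_neg hpos hint hp).const_mul p
  have hsplit : (fun x : ℝ => 1 - exp (-(p * x)) - p * (x * exp (-(p * x)))) =
      fun x => 1 - (1 + p * x) * exp (-(p * x)) := by
    ext x; ring
  have hsub := integral_sub hQ hP
  have hint' := hQ.sub' hP
  rw [hsplit] at hsub hint'
  rw [desingLaplace, laplaceMass, ← integral_const_mul, ← hsub,
    ofReal_integral_eq_lintegral_ofReal hint']
  exact ae_of_all _ fun x => sub_nonneg.2 (one_add_mul_exp_neg_le_one (p * x))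

lemma hasDerivAt_desingLaplace (hpos : ∀ᵐ x ∂μ, 0 < x) (hint : Integrable (fun x => x) μ) {p : ℝ}
    (hp : 0 < p) : HasDerivAt (desingLaplace μ) (laplaceMass μ p) p := by
  refine (hasDerivAt_integral_of_dominated_loc_of_deriv_le (F := fun p x => 1 - exp (-(p * x)))
    (F' := fun p x => x * exp (-(p * x))) (bound := fun x => x) (Ioi_mem_nhds hp)
    (Eventually.of_forall fun q => by fun_prop) (integrable_one_sub_exp_neg hpos hint hp.le)
    (by fun_prop) ?_ hint (ae_of_all _ fun x q _ => ?_)).2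
  · filter_upwards [hpos] with x hx q hq
    have hmem := mul_exp_neg_mem_Icc (le_of_lt hq) hx.le
    exact (norm_of_nonneg hmem.1).trans_le hmem.2
  · exact ((((hasDerivAt_id' q).mul_const x).fun_neg.exp).const_sub 1).congr_deriv (by ring)

lemma tendsto_laplaceMass_zero (hpos : ∀ᵐ x ∂μ, 0 < x) (hint : Integrable (fun x => x) μ) :
    Tendsto (laplaceMass μ) (𝓝[>] 0) (𝓝 (∫ x, x ∂μ)) := by
  refine tendsto_integral_filter_of_dominated_convergence (fun x => x)
    (Eventually.of_forall fun p => by fun_prop) ?_ hint (ae_of_all _ fun x => ?_)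
  · filter_upwards [self_mem_nhdsWithin] with p hp
    filter_upwards [hpos] with x hx
    have hmem := mul_exp_neg_mem_Icc (le_of_lt hp) hx.le
    exact (norm_of_nonneg hmem.1).trans_le hmem.2
  · have hcont : Continuous fun p : ℝ => x * exp (-(p * x)) := by fun_prop
    simpa using (hcont.tendsto 0).mono_left nhdsWithin_le_nhds

lemma mul_laplaceMass_le_desingLaplace (hpos : ∀ᵐ x ∂μ, 0 < x) (hint : Integrable (fun x => x) μ)
    {p : ℝ} (hp : 0 ≤ p) : p * laplaceMass μ p ≤ desingLaplace μ p := by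
  simp only [desingLaplace, laplaceMass, ← integral_const_mul]
  refine integral_mono ((integrable_mul_exp_neg hpos hint hp).const_mul p)
    (integrable_one_sub_exp_neg hpos hint hp) fun x => ?_
  linarith [one_add_mul_exp_neg_le_one (p * x)]

lemma desingLaplace_le (hpos : ∀ᵐ x ∂μ, 0 < x) (hint : Integrable (fun x => x) μ) {p : ℝ}
    (hp : 0 ≤ p) : desingLaplace μ p ≤ p * ∫ x, x ∂μ := by
  rw [desingLaplace, ← integral_const_mul]
  exact integral_mono (integrable_one_sub_exp_neg hpos hint hp) (hint.const_mul p)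
    fun x => one_sub_exp_neg_le _

lemma tendsto_desingLaplace_div_zero (hpos : ∀ᵐ x ∂μ, 0 < x) (hint : Integrable (fun x => x) μ) :
    Tendsto (fun p => desingLaplace μ p / p) (𝓝[>] 0) (𝓝 (∫ x, x ∂μ)) := by
  refine tendsto_of_tendsto_of_tendsto_of_le_of_le' (tendsto_laplaceMass_zero hpos hint)
    tendsto_const_nhds ?_ ?_ <;> filter_upwards [self_mem_nhdsWithin] with p hp
  · rw [le_div_iff₀' hp]
    exact mul_laplaceMass_le_desingLaplace hpos hint (le_of_lt hp)
  · rw [div_le_iff₀' hp]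
    exact desingLaplace_le hpos hint (le_of_lt hp)

lemma IsMeasureProfile.integrable_id (hμ : IsMeasureProfile k μ) : Integrable (fun x => x) μ :=
  ⟨by fun_prop, (hasFiniteIntegral_iff_ofReal (hμ.ae_pos.mono fun _ => le_of_lt)).2
    (hμ.lintegral_id.trans_lt ENNReal.one_lt_top)⟩

lemma IsMeasureProfile.integral_id (hμ : IsMeasureProfile k μ) : ∫ x, x ∂μ = 1 := by
  rw [integral_eq_lintegral_of_nonneg_ae (hμ.ae_pos.mono fun _ => le_of_lt) (by fun_prop),
    hμ.lintegral_id, ENNReal.toReal_one]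

lemma IsMeasureProfile.lintegral_prod_one_sub_exp_neg [SFinite μ] (hμ : IsMeasureProfile k μ)
    {p : ℝ} (hp : 0 ≤ p) :
    ∫⁻ q : ℝ × ℝ, ENNReal.ofReal (1 - exp (-(p * q.1))) *
        ENNReal.ofReal (1 - exp (-(p * q.2))) ∂μ.prod μ =
      ENNReal.ofReal (desingLaplace μ p ^ 2) := by
  rw [lintegral_prod_mul (f := fun x => ENNReal.ofReal (1 - exp (-(p * x))))
    (g := fun x => ENNReal.ofReal (1 - exp (-(p * x)))) (by fun_prop) (by fun_prop),
    lintegral_one_sub_exp_neg hμ.ae_pos hμ.integrable_id hp,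
    ← ENNReal.ofReal_mul (desingLaplace_nonneg hμ.ae_pos hp), sq]

lemma IsMeasureProfile.two_mul_ofReal_sub [SFinite μ] (hμ : IsMeasureProfile k μ)
    (hk : IsNearTwo α ε k) {p : ℝ} (hp : 0 ≤ p) :
    2 * ENNReal.ofReal (desingLaplace μ p - p * laplaceMass μ p) =
      ∫⁻ q : ℝ × ℝ, k q * (ENNReal.ofReal (1 - exp (-(p * q.1))) *
        ENNReal.ofReal (1 - exp (-(p * q.2)))) ∂μ.prod μ := by
  rw [← hμ.laplace_identity hk.measurable hk.swap hp,
    lintegral_one_sub_one_add_mul_exp_neg hμ.ae_pos hμ.integrable_id hp]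

lemma IsMeasureProfile.sq_desingLaplace_le [SFinite μ] (hμ : IsMeasureProfile k μ)
    (hk : IsNearTwo α ε k) {p : ℝ} (hp : 0 ≤ p) :
    desingLaplace μ p ^ 2 ≤ desingLaplace μ p - p * laplaceMass μ p := by
  have hle : 2 * ENNReal.ofReal (desingLaplace μ p ^ 2) ≤
      2 * ENNReal.ofReal (desingLaplace μ p - p * laplaceMass μ p) := by
    rw [hμ.two_mul_ofReal_sub hk hp, ← hμ.lintegral_prod_one_sub_exp_neg hp,
      ← lintegral_const_mul _ (by fun_prop)]
    refine lintegral_mono_ae ?_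
    filter_upwards [ae_prod_pos hμ.ae_pos] with q ⟨hq₁, hq₂⟩
    gcongr
    exact hk.two_le q hq₁ hq₂
  rw [ENNReal.mul_le_mul_iff_right two_ne_zero ENNReal.ofNat_ne_top] at hle
  exact (ENNReal.ofReal_le_ofReal_iff (sub_nonneg.2
    (mul_laplaceMass_le_desingLaplace hμ.ae_pos hμ.integrable_id hp))).1 hle

theorem IsMeasureProfile.desingLaplace_le_div [SFinite μ] (hμ : IsMeasureProfile k μ)
    (hk : IsNearTwo α ε k) {p : ℝ} (hp : 0 < p) : desingLaplace μ p ≤ p / (1 + p) := by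
  have hlim := tendsto_desingLaplace_div_zero hμ.ae_pos hμ.integrable_id
  rw [hμ.integral_id] at hlim
  exact le_div_one_add_of_sq_le
    (fun p hp => hasDerivAt_desingLaplace hμ.ae_pos hμ.integrable_id hp) hlim
    (fun p hp => hμ.sq_desingLaplace_le hk hp.le) hp

lemma IsMeasureProfile.measure_univ_le_one [SFinite μ] (hμ : IsMeasureProfile k μ)
    (hk : IsNearTwo α ε k) : μ univ ≤ 1 := by
  have hlim : Tendsto (fun n : ℕ => ∫⁻ x, ENNReal.ofReal (1 - exp (-(n * x))) ∂μ) atTop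
      (𝓝 (∫⁻ _, 1 ∂μ)) := by
    refine lintegral_tendsto_of_tendsto_of_monotone (fun n => by fun_prop) ?_ ?_ <;>
      filter_upwards [hμ.ae_pos] with x hx
    · intro n m hnm
      dsimp only
      gcongr
    · have hexp : Tendsto (fun n : ℕ => exp (-(n * x))) atTop (𝓝 0) :=
        tendsto_exp_neg_atTop_nhds_zero.comp
          (tendsto_natCast_atTop_atTop.atTop_mul_const hx)
      simpa using ENNReal.tendsto_ofReal (hexp.const_sub 1)
  rw [lintegral_one] at hlim
  refine le_of_tendsto hlim ?_
  filter_upwards [eventually_gt_atTop 0] with n hn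
  have hn' : (0 : ℝ) < n := Nat.cast_pos.2 hn
  rw [lintegral_one_sub_exp_neg hμ.ae_pos hμ.integrable_id hn'.le, ENNReal.ofReal_le_one]
  exact (hμ.desingLaplace_le_div hk hn').trans (div_le_one_of_le₀ (by linarith) (by linarith))

lemma IsMeasureProfile.lintegral_ratioKernel_mul_le [SFinite μ] (hμ : IsMeasureProfile k μ) {p : ℝ}
    (hp : 0 ≤ p) :
    ∫⁻ q : ℝ × ℝ, ratioKernel α q * (ENNReal.ofReal (1 - exp (-(p * q.1))) *
        ENNReal.ofReal (1 - exp (-(p * q.2)))) ∂μ.prod μ ≤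
      ENNReal.ofReal (p ^ 2) * (2 * (rpowMoment μ (1 + α) * rpowMoment μ (1 - α))) := by
  have hfac : ∀ y : ℝ, ENNReal.ofReal (1 - exp (-(p * y))) ≤
      ENNReal.ofReal p * ENNReal.ofReal y := fun y => by
    rw [← ENNReal.ofReal_mul hp]
    exact ENNReal.ofReal_le_ofReal (one_sub_exp_neg_le _)
  rw [← lintegral_ratioKernel_mul hμ.ae_pos,
    ← lintegral_const_mul _ (by fun_prop)]
  refine lintegral_mono fun q => ?_
  calc ratioKernel α q * (ENNReal.ofReal (1 - exp (-(p * q.1))) *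
        ENNReal.ofReal (1 - exp (-(p * q.2))))
      ≤ ratioKernel α q *
        (ENNReal.ofReal p * ENNReal.ofReal q.1 * (ENNReal.ofReal p * ENNReal.ofReal q.2)) := by
        gcongr <;> exact hfac _
    _ = ENNReal.ofReal (p ^ 2) * (ratioKernel α q *
        (ENNReal.ofReal q.1 * ENNReal.ofReal q.2)) := by
        rw [sq, ENNReal.ofReal_mul hp]; ring

lemma IsMeasureProfile.sub_le_sq_desingLaplace_add [SFinite μ] (hμ : IsMeasureProfile k μ)
    (hk : IsNearTwo α ε k) (hε : 0 ≤ ε) {C : ℝ} (hC : 0 ≤ C)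
    (hM : rpowMoment μ (1 + α) * rpowMoment μ (1 - α) ≤ ENNReal.ofReal C) {p : ℝ} (hp : 0 ≤ p) :
    desingLaplace μ p - p * laplaceMass μ p ≤ desingLaplace μ p ^ 2 + ε * C * p ^ 2 := by
  have hle : 2 * ENNReal.ofReal (desingLaplace μ p - p * laplaceMass μ p) ≤
      2 * ENNReal.ofReal (desingLaplace μ p ^ 2 + ε * C * p ^ 2) := by
    calc 2 * ENNReal.ofReal (desingLaplace μ p - p * laplaceMass μ p)
        ≤ ∫⁻ q : ℝ × ℝ, (2 + ENNReal.ofReal ε * ratioKernel α q) *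
          (ENNReal.ofReal (1 - exp (-(p * q.1))) * ENNReal.ofReal (1 - exp (-(p * q.2))))
            ∂μ.prod μ := by
          rw [hμ.two_mul_ofReal_sub hk hp]
          refine lintegral_mono_ae ?_
          filter_upwards [ae_prod_pos hμ.ae_pos] with q ⟨hq₁, hq₂⟩
          gcongr
          exact hk.le_ratioKernel hε hq₁ hq₂
      _ ≤ 2 * ENNReal.ofReal (desingLaplace μ p ^ 2) +
          ENNReal.ofReal ε * (ENNReal.ofReal (p ^ 2) * (2 * ENNReal.ofReal C)) := by
          simp only [add_mul, mul_assoc]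
          rw [lintegral_add_left (by fun_prop), lintegral_const_mul _ (by fun_prop),
            hμ.lintegral_prod_one_sub_exp_neg hp,
            lintegral_const_mul _ (by fun_prop)]
          gcongr
          exact (hμ.lintegral_ratioKernel_mul_le hp).trans (by gcongr)
      _ = 2 * ENNReal.ofReal (desingLaplace μ p ^ 2 + ε * C * p ^ 2) := by
          rw [ENNReal.ofReal_add (by positivity) (by positivity),
            ENNReal.ofReal_mul (by positivity), ENNReal.ofReal_mul hε]
          ring
  rw [ENNReal.mul_le_mul_iff_right two_ne_zero ENNReal.ofNat_ne_top] at hle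
  exact (ENNReal.ofReal_le_ofReal_iff (by positivity)).1 hle

theorem IsMeasureProfile.div_sub_le_desingLaplace [SFinite μ] (hμ : IsMeasureProfile k μ)
    (hk : IsNearTwo α ε k) (hε : 0 ≤ ε) {C : ℝ} (hC : 0 ≤ C)
    (hM : rpowMoment μ (1 + α) * rpowMoment μ (1 - α) ≤ ENNReal.ofReal C) {p : ℝ} (hp : 0 < p) :
    p / (1 + p) - ε * C * p ^ 2 ≤ desingLaplace μ p := by
  have hlim := tendsto_desingLaplace_div_zero hμ.ae_pos hμ.integrable_id
  rw [hμ.integral_id] at hlim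
  exact div_one_add_sub_le (fun p hp => hasDerivAt_desingLaplace hμ.ae_pos hμ.integrable_id hp) hlim
    (mul_nonneg hε hC) (fun p hp => desingLaplace_nonneg hμ.ae_pos hp.le)
    (fun p hp => hμ.desingLaplace_le_div hk hp)
    (fun p hp => hμ.sub_le_sq_desingLaplace_add hk hε hC hM hp.le) hp

end LaplaceBounds

section Moments

lemma IsNearTwo.mono {ε' : ℝ} (hk : IsNearTwo α ε k) (hε : ε ≤ ε') : IsNearTwo α ε' k where
  measurable := hk.measurable
  swap := hk.swap
  two_le := hk.two_le
  le p hp₁ hp₂ := (hk.le p hp₁ hp₂).trans (by gcongr)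

lemma IsNearTwo.le_of_snd_le_fst (hk : IsNearTwo α ε k) (hα : 0 ≤ α) (hε : 0 ≤ ε) {p : ℝ × ℝ}
    (hp : 0 < p.2) (hle : p.2 ≤ p.1) : k p ≤ ENNReal.ofReal ((2 + 2 * ε) * (p.1 / p.2) ^ α) := by
  have hp₁ : 0 < p.1 := hp.trans_le hle
  have hone : 1 ≤ (p.1 / p.2) ^ α := one_le_rpow ((one_le_div hp).2 hle) hα
  have hinv : (p.2 / p.1) ^ α ≤ 1 := rpow_le_one (by positivity) ((div_le_one hp₁).2 hle) hα
  refine (hk.le p hp₁ hp).trans ?_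
  rw [← ENNReal.ofReal_ofNat 2, ← ENNReal.ofReal_add (by positivity) (by positivity)]
  refine ENNReal.ofReal_le_ofReal ?_
  nlinarith

lemma IsNearTwo.le_of_fst_le_snd (hk : IsNearTwo α ε k) (hα : 0 ≤ α) (hε : 0 ≤ ε) {p : ℝ × ℝ}
    (hp : 0 < p.1) (hle : p.1 ≤ p.2) : k p ≤ ENNReal.ofReal ((2 + 2 * ε) * (p.2 / p.1) ^ α) :=
  hk.swap p ▸ hk.le_of_snd_le_fst hα hε (p := p.swap) hp hle

lemma rpow_le_rpow_add_rpow {r s t x : ℝ} (hrs : r ≤ s) (hst : s ≤ t) (hx : 0 < x) :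
    x ^ s ≤ x ^ r + x ^ t := by
  rcases le_total x 1 with h | h
  · exact (rpow_le_rpow_of_exponent_ge hx h hrs).trans
      (le_add_of_nonneg_right (rpow_nonneg hx.le t))
  · exact (rpow_le_rpow_of_exponent_le h hst).trans
      (le_add_of_nonneg_left (rpow_nonneg hx.le r))

lemma rpowMoment_le_add (hμ : ∀ᵐ x ∂μ, 0 < x) {r s t : ℝ} (hrs : r ≤ s) (hst : s ≤ t) :
    rpowMoment μ s ≤ rpowMoment μ r + rpowMoment μ t := by
  simp only [rpowMoment]
  rw [← lintegral_add_left (by fun_prop)]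
  refine lintegral_mono_ae ?_
  filter_upwards [hμ] with x hx
  rw [← ENNReal.ofReal_add (by positivity) (by positivity)]
  exact ENNReal.ofReal_le_ofReal (rpow_le_rpow_add_rpow hrs hst hx)

lemma rpowMoment_zero : rpowMoment μ 0 = μ univ := by
  simp [rpowMoment]

lemma IsMeasureProfile.rpowMoment_one (hμ : IsMeasureProfile k μ) : rpowMoment μ 1 = 1 := by
  simpa only [rpowMoment, rpow_one] using hμ.lintegral_id

lemma IsMeasureProfile.rpowMoment_le_two [SFinite μ] (hμ : IsMeasureProfile k μ)
    (hk : IsNearTwo α ε k) {s : ℝ} (hs : s ∈ Icc 0 1) : rpowMoment μ s ≤ 2 := by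
  refine (rpowMoment_le_add hμ.ae_pos hs.1 hs.2).trans ?_
  rw [rpowMoment_zero, hμ.rpowMoment_one, ← one_add_one_eq_two]
  gcongr
  exact hμ.measure_univ_le_one hk

lemma setLIntegral_Ioo_rpow_le_mul {s β y z : ℝ} (hs : 0 ≤ s) (hβ : β ≤ s) (hy : 0 < y)
    (hzy : z ≤ y) :
    ∫⁻ x in Ioo y (y + z), ENNReal.ofReal (x ^ β) ≤ ENNReal.ofReal (2 ^ s * y ^ β * z) := by
  have hle : ∀ x ∈ Ioo y (y + z), ENNReal.ofReal (x ^ β) ≤ ENNReal.ofReal (2 ^ s * y ^ β) := by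
    intro x hx
    have hone : 1 ≤ x / y := (one_le_div hy).2 hx.1.le
    have htwo : x / y ≤ 2 := (div_le_iff₀ hy).2 (by linarith [hx.2])
    refine ENNReal.ofReal_le_ofReal ?_
    calc x ^ β = (x / y) ^ β * y ^ β := by
          rw [← mul_rpow (by positivity) hy.le, div_mul_cancel₀ _ hy.ne']
      _ ≤ 2 ^ s * y ^ β := by
          gcongr
          exact (rpow_le_rpow_of_exponent_le hone hβ).trans (by gcongr)
  refine (setLIntegral_mono measurable_const hle).trans_eq ?_
  rw [setLIntegral_const, volume_Ioo, add_sub_cancel_left, ← ENNReal.ofReal_mul (by positivity)]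

lemma setLIntegral_Ioo_rpow_le_div {β y z : ℝ} (hβ : -1 < β) (hy : 0 < y) (hyz : y ≤ z) :
    ∫⁻ x in Ioo y (y + z), ENNReal.ofReal (x ^ β) ≤
      ENNReal.ofReal ((2 * z) ^ (β + 1) / (β + 1)) := by
  have hβ' : 0 < β + 1 := by linarith
  have hpos : ∀ x ∈ Icc y (y + z), 0 < x := fun x hx => hy.trans_le hx.1
  rw [setLIntegral_Ioo_ofReal_eq_sub (F := fun x => x ^ (β + 1) / (β + 1)) (by linarith)
    (fun x hx => ?_) (fun x hx =>
      (continuousAt_rpow_const x β (Or.inl (hpos x hx).ne')).continuousWithinAt)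
    (fun x hx => rpow_nonneg (hpos x hx).le β)]
  · refine ENNReal.ofReal_le_ofReal ((sub_le_self _ (by positivity)).trans ?_)
    have : y + z ≤ 2 * z := by linarith
    gcongr
    linarith
  · exact ((hasDerivAt_rpow_const (Or.inl (hpos x hx).ne')).div_const _).congr_deriv (by
      rw [add_sub_cancel_right]; field_simp)

lemma IsNearTwo.mul_setLIntegral_Ioo_rpow_le_of_snd_le_fst (hk : IsNearTwo α ε k) (hα : 0 ≤ α)
    (hε : 0 ≤ ε) {s : ℝ} (hs : 0 ≤ s) {y z : ℝ} (hz : 0 < z) (hzy : z ≤ y) :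
    ENNReal.ofReal y * k (y, z) * ∫⁻ x in Ioo y (y + z), ENNReal.ofReal (x ^ (s - 1 - α)) ≤
      ENNReal.ofReal ((2 + 2 * ε) * 2 ^ s) *
        (ENNReal.ofReal (y ^ s) * ENNReal.ofReal (z ^ (1 - α))) := by
  have hy : 0 < y := hz.trans_le hzy
  calc ENNReal.ofReal y * k (y, z) * ∫⁻ x in Ioo y (y + z), ENNReal.ofReal (x ^ (s - 1 - α))
      ≤ ENNReal.ofReal y * ENNReal.ofReal ((2 + 2 * ε) * (y / z) ^ α) *
        ENNReal.ofReal (2 ^ s * y ^ (s - 1 - α) * z) := by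
        gcongr
        · exact hk.le_of_snd_le_fst hα hε (p := (y, z)) hz hzy
        · exact setLIntegral_Ioo_rpow_le_mul hs (by linarith) hy hzy
    _ = _ := by
        rw [← ENNReal.ofReal_mul hy.le, ← ENNReal.ofReal_mul (by positivity),
          ← ENNReal.ofReal_mul (by positivity), ← ENNReal.ofReal_mul (by positivity),
          rpow_sub hy, rpow_sub hy, rpow_one, div_rpow hy.le hz.le, rpow_sub hz, rpow_one]
        congr 1
        field_simp

lemma IsNearTwo.mul_setLIntegral_Ioo_rpow_le_of_fst_le_snd (hk : IsNearTwo α ε k)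
    (hα : α ∈ Ico 0 1) (hε : 0 ≤ ε) {s : ℝ} (hs : 1 ≤ s) {y z : ℝ} (hy : 0 < y) (hyz : y ≤ z) :
    ENNReal.ofReal y * k (y, z) * ∫⁻ x in Ioo y (y + z), ENNReal.ofReal (x ^ (s - 1 - α)) ≤
      ENNReal.ofReal ((2 + 2 * ε) * 2 ^ s / (1 - α)) *
        (ENNReal.ofReal (y ^ (1 - α)) * ENNReal.ofReal (z ^ s)) := by
  have hα' : 0 < 1 - α := sub_pos.2 hα.2
  have hz : 0 < z := hy.trans_le hyz
  calc ENNReal.ofReal y * k (y, z) * ∫⁻ x in Ioo y (y + z), ENNReal.ofReal (x ^ (s - 1 - α))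
      ≤ ENNReal.ofReal y * ENNReal.ofReal ((2 + 2 * ε) * (z / y) ^ α) *
        ENNReal.ofReal ((2 * z) ^ (s - 1 - α + 1) / (s - 1 - α + 1)) := by
        gcongr
        · exact hk.le_of_fst_le_snd hα.1 hε (p := (y, z)) hy hyz
        · exact setLIntegral_Ioo_rpow_le_div (by linarith) hy hyz
    _ ≤ ENNReal.ofReal y * ENNReal.ofReal ((2 + 2 * ε) * (z / y) ^ α) *
        ENNReal.ofReal (2 ^ s * z ^ (s - α) / (1 - α)) := by
        gcongr
        · rw [mul_rpow zero_le_two hz.le, show s - 1 - α + 1 = s - α by ring]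
          gcongr
          · norm_num
          · linarith [hα.1]
        · linarith
    _ = _ := by
        rw [← ENNReal.ofReal_mul hy.le, ← ENNReal.ofReal_mul (by positivity),
          ← ENNReal.ofReal_mul (by positivity), ← ENNReal.ofReal_mul (by positivity),
          rpow_sub hz, div_rpow hz.le hy.le, rpow_sub hy, rpow_one]
        congr 1
        field_simp

lemma IsNearTwo.mul_setLIntegral_Ioo_rpow_le (hk : IsNearTwo α ε k) (hα : α ∈ Ico 0 1)
    (hε : 0 ≤ ε) {s : ℝ} (hs : 1 ≤ s) {p : ℝ × ℝ} (hp₁ : 0 < p.1) (hp₂ : 0 < p.2) :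
    ENNReal.ofReal p.1 * k p * ∫⁻ x in Ioo p.1 (p.1 + p.2), ENNReal.ofReal (x ^ (s - 1 - α)) ≤
      ENNReal.ofReal ((2 + 2 * ε) * 2 ^ s / (1 - α)) *
        (ENNReal.ofReal (p.1 ^ s) * ENNReal.ofReal (p.2 ^ (1 - α)) +
          ENNReal.ofReal (p.1 ^ (1 - α)) * ENNReal.ofReal (p.2 ^ s)) := by
  have hconst : (2 + 2 * ε) * 2 ^ s ≤ (2 + 2 * ε) * 2 ^ s / (1 - α) :=
    le_div_self (by positivity) (sub_pos.2 hα.2) (sub_le_self 1 hα.1)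
  rcases le_total p.2 p.1 with hle | hle
  · exact (hk.mul_setLIntegral_Ioo_rpow_le_of_snd_le_fst hα.1 hε (zero_le_one.trans hs) hp₂
      hle).trans (mul_le_mul' (ENNReal.ofReal_le_ofReal hconst) le_self_add)
  · exact (hk.mul_setLIntegral_Ioo_rpow_le_of_fst_le_snd hα hε hs hp₁ hle).trans
      (mul_le_mul_right le_add_self _)

lemma IsMeasureProfile.rpowMoment_add_le [SFinite μ] (hμ : IsMeasureProfile k μ)
    (hk : IsNearTwo α ε k) (hα : α ∈ Ico 0 1) (hε : 0 ≤ ε) {s : ℝ} (hs : 1 ≤ s) :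
    rpowMoment μ (s + (1 - α)) ≤ ENNReal.ofReal ((2 + 2 * ε) * 2 ^ s / (1 - α)) *
      (2 * (rpowMoment μ s * rpowMoment μ (1 - α))) := by
  have htest : rpowMoment μ (s + (1 - α)) =
      ∫⁻ x, ENNReal.ofReal (x ^ 2) * ENNReal.ofReal (x ^ (s - 1 - α)) ∂μ := by
    refine lintegral_congr_ae ?_
    filter_upwards [hμ.ae_pos] with x hx
    rw [← ENNReal.ofReal_mul (sq_nonneg x), ← rpow_natCast, ← rpow_add hx]
    congr 2
    push_cast
    ring
  rw [htest, hμ.lintegral_sq_mul hk.measurable (by fun_prop)]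
  calc ∫⁻ p : ℝ × ℝ, ENNReal.ofReal p.1 * k p *
        (∫⁻ x in Ioo p.1 (p.1 + p.2), ENNReal.ofReal (x ^ (s - 1 - α))) ∂μ.prod μ
      ≤ ∫⁻ p : ℝ × ℝ, ENNReal.ofReal ((2 + 2 * ε) * 2 ^ s / (1 - α)) *
        (ENNReal.ofReal (p.1 ^ s) * ENNReal.ofReal (p.2 ^ (1 - α)) +
          ENNReal.ofReal (p.1 ^ (1 - α)) * ENNReal.ofReal (p.2 ^ s)) ∂μ.prod μ := by
        refine lintegral_mono_ae ?_
        filter_upwards [ae_prod_pos hμ.ae_pos] with p hp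
        exact hk.mul_setLIntegral_Ioo_rpow_le hα hε hs hp.1 hp.2
    _ = _ := by
        rw [lintegral_const_mul _ (by fun_prop), lintegral_add_left (by fun_prop),
          lintegral_rpow_mul_rpow, lintegral_rpow_mul_rpow]
        ring

theorem exists_rpowMoment_le (hα : α ∈ Ico 0 1) (hε : 0 ≤ ε) {s : ℝ} (hs : 1 ≤ s) :
    ∃ C : ℝ≥0, ∀ (k : ℝ × ℝ → ℝ≥0∞) (μ : Measure ℝ) [SFinite μ], IsNearTwo α ε k →
      IsMeasureProfile k μ → rpowMoment μ s ≤ C := by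
  have hα' : 0 < 1 - α := sub_pos.2 hα.2
  have harith (n : ℕ) : ∃ C : ℝ≥0, ∀ (k : ℝ × ℝ → ℝ≥0∞) (μ : Measure ℝ) [SFinite μ],
      IsNearTwo α ε k → IsMeasureProfile k μ → rpowMoment μ (1 + n * (1 - α)) ≤ C := by
    induction n with
    | zero => exact ⟨1, fun k μ _ _ hμ => by simp [hμ.rpowMoment_one]⟩
    | succ n ih =>
      obtain ⟨C, hC⟩ := ih
      refine ⟨((2 + 2 * ε) * 2 ^ (1 + n * (1 - α)) / (1 - α)).toNNReal * (2 * (C * 2)),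
        fun k μ _ hk hμ => ?_⟩
      calc rpowMoment μ (1 + (n + 1 : ℕ) * (1 - α))
          = rpowMoment μ (1 + n * (1 - α) + (1 - α)) := by push_cast; ring_nf
        _ ≤ ENNReal.ofReal ((2 + 2 * ε) * 2 ^ (1 + n * (1 - α)) / (1 - α)) *
            (2 * (rpowMoment μ (1 + n * (1 - α)) * rpowMoment μ (1 - α))) :=
            hμ.rpowMoment_add_le hk hα hε (le_add_of_nonneg_right (by positivity))
        _ ≤ _ := by
            push_cast
            gcongr
            · exact le_rfl
            · exact hC k μ hk hμ
            · exact hμ.rpowMoment_le_two hk ⟨hα'.le, sub_le_self 1 hα.1⟩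
  obtain ⟨n, hn⟩ := exists_nat_ge ((s - 1) / (1 - α))
  obtain ⟨C, hC⟩ := harith n
  refine ⟨1 + C, fun k μ _ hk hμ => ?_⟩
  calc rpowMoment μ s ≤ rpowMoment μ 1 + rpowMoment μ (1 + n * (1 - α)) :=
        rpowMoment_le_add hμ.ae_pos hs (by linarith [(div_le_iff₀ hα').1 hn])
    _ ≤ (1 + C : ℝ≥0) := by
        rw [hμ.rpowMoment_one]
        push_cast
        gcongr
        exact hC k μ hk hμ

end Moments

section NegativeMoments

lemma exists_rpowMoment_mul_le (hα : α ∈ Ico 0 1) :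
    ∃ C : ℝ≥0, ∀ (ε : ℝ) (k : ℝ × ℝ → ℝ≥0∞) (μ : Measure ℝ) [SFinite μ], ε ∈ Icc 0 1 →
      IsNearTwo α ε k → IsMeasureProfile k μ →
        rpowMoment μ (1 + α) * rpowMoment μ (1 - α) ≤ C := by
  obtain ⟨C, hC⟩ := exists_rpowMoment_le hα zero_le_one (le_add_of_nonneg_right hα.1)
  refine ⟨C * 2, fun ε k μ _ hε hk hμ => ?_⟩
  push_cast
  gcongr
  · exact hC k μ (hk.mono hε.2) hμ
  · exact hμ.rpowMoment_le_two hk ⟨sub_nonneg.2 hα.2.le, sub_le_self 1 hα.1⟩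

theorem exists_div_sub_le_desingLaplace (hα : α ∈ Ico 0 1) :
    ∃ C : ℝ≥0, ∀ (ε : ℝ) (k : ℝ × ℝ → ℝ≥0∞) (μ : Measure ℝ) [SFinite μ], ε ∈ Icc 0 1 →
      IsNearTwo α ε k → IsMeasureProfile k μ → ∀ p, 0 < p →
        p / (1 + p) - ε * C * p ^ 2 ≤ desingLaplace μ p := by
  obtain ⟨C, hC⟩ := exists_rpowMoment_mul_le hα
  refine ⟨C, fun ε k μ _ hε hk hμ p hp => hμ.div_sub_le_desingLaplace hk hε.1 C.coe_nonneg ?_ hp⟩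
  exact (hC ε k μ hε hk hμ).trans_eq (ENNReal.ofReal_coe_nnreal).symm

lemma desingLaplace_le_add_measure_Ici (hpos : ∀ᵐ x ∂μ, 0 < x)
    (hint : Integrable (fun x => x) μ) (hμ : μ univ ≤ 1) {p : ℝ} (hp : 0 ≤ p) (r : ℝ) :
    ENNReal.ofReal (desingLaplace μ p) ≤ ENNReal.ofReal (p * r) + μ (Ici r) := by
  rw [← lintegral_one_sub_exp_neg hpos hint hp]
  calc ∫⁻ x, ENNReal.ofReal (1 - exp (-(p * x))) ∂μ
      ≤ ∫⁻ x, ENNReal.ofReal (p * r) + (Ici r).indicator 1 x ∂μ := by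
        refine lintegral_mono fun x => ?_
        rcases lt_or_ge x r with hx | hx
        · refine le_add_right (ENNReal.ofReal_le_ofReal ?_)
          exact (one_sub_exp_neg_le _).trans (by gcongr)
        · rw [indicator_of_mem (show x ∈ Ici r from hx), Pi.one_apply]
          refine le_add_left (ENNReal.ofReal_le_one.2 ?_)
          linarith [exp_nonneg (-(p * x))]
    _ ≤ ENNReal.ofReal (p * r) + μ (Ici r) := by
        rw [lintegral_add_left measurable_const, lintegral_const,
          lintegral_indicator_one measurableSet_Ici]
        gcongr
        exact mul_le_of_le_one_right' hμ

lemma one_sub_mul_lintegral_rpow_sub_two {c y x₀ : ℝ} (hc : c < 1) (hy : 0 < y) (hyx : y ≤ x₀) :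
    ENNReal.ofReal (1 - c) * (ENNReal.ofReal y * ∫⁻ x in Ioo y x₀, ENNReal.ofReal (x ^ (c - 2))) =
      ENNReal.ofReal (y ^ c - x₀ ^ (c - 1) * y) := by
  have hc' : 0 < 1 - c := sub_pos.2 hc
  have hpos : ∀ x ∈ Icc y x₀, 0 < x := fun x hx => hy.trans_le hx.1
  have hderiv : ∀ x ∈ Icc y x₀,
      HasDerivAt (fun x => -(x ^ (c - 1)) / (1 - c)) (x ^ (c - 2)) x := fun x hx =>
    ((hasDerivAt_rpow_const (Or.inl (hpos x hx).ne')).fun_neg.div_const _).congr_deriv (by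
      rw [show c - 1 - 1 = c - 2 by ring]
      field_simp
      ring)
  rw [setLIntegral_Ioo_ofReal_eq_sub hyx hderiv (fun x hx =>
      (continuousAt_rpow_const x _ (Or.inl (hpos x hx).ne')).continuousWithinAt)
    (fun x hx => rpow_nonneg (hpos x hx).le _), ← ENNReal.ofReal_mul hy.le,
    ← ENNReal.ofReal_mul hc'.le]
  congr 1
  rw [rpow_sub_one hy.ne']
  field_simp
  ring

lemma lintegral_sq_mul_indicator_rpow (hμ : ∀ᵐ x ∂μ, 0 < x) (c : ℝ) {s : Set ℝ}
    (hs : MeasurableSet s) :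
    ∫⁻ x, ENNReal.ofReal (x ^ 2) * s.indicator (fun x => ENNReal.ofReal (x ^ (c - 2))) x ∂μ =
      ∫⁻ x in s, ENNReal.ofReal (x ^ c) ∂μ := by
  rw [← lintegral_indicator hs]
  refine lintegral_congr_ae ?_
  filter_upwards [hμ] with x hx
  by_cases hxs : x ∈ s
  · rw [indicator_of_mem hxs, indicator_of_mem hxs, ← ENNReal.ofReal_mul (sq_nonneg x),
      ← rpow_natCast, ← rpow_add hx, Nat.cast_ofNat, add_sub_cancel]
  · rw [indicator_of_notMem hxs, indicator_of_notMem hxs, mul_zero]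

-- A collision of a cluster in `(r, x₀)` with one of size at least `x₀` carries mass through every
-- size between the smaller cluster and `x₀`.
lemma IsNearTwo.le_mul_lintegral_indicator_rpow (hk : IsNearTwo α ε k) {c r x₀ : ℝ} (hc : c < 1)
    (hr : 0 < r) {p : ℝ × ℝ} (hp : p ∈ Ioo r x₀ ×ˢ Ici x₀) :
    ENNReal.ofReal (p.1 ^ c - x₀ ^ (c - 1) * p.1) * 2 ≤
      ENNReal.ofReal (1 - c) * (ENNReal.ofReal p.1 * k p * ∫⁻ x in Ioo p.1 (p.1 + p.2),
        (Ioo r x₀).indicator (fun x => ENNReal.ofReal (x ^ (c - 2))) x) := by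
  obtain ⟨⟨hry, hyx⟩, hz : x₀ ≤ p.2⟩ := hp
  have hy : 0 < p.1 := hr.trans hry
  calc ENNReal.ofReal (p.1 ^ c - x₀ ^ (c - 1) * p.1) * 2
      = ENNReal.ofReal (1 - c) * (ENNReal.ofReal p.1 * 2 *
        ∫⁻ x in Ioo p.1 x₀, ENNReal.ofReal (x ^ (c - 2))) := by
        rw [← one_sub_mul_lintegral_rpow_sub_two hc hy hyx.le]
        ring
    _ = ENNReal.ofReal (1 - c) * (ENNReal.ofReal p.1 * 2 * ∫⁻ x in Ioo p.1 x₀,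
        (Ioo r x₀).indicator (fun x => ENNReal.ofReal (x ^ (c - 2))) x) := by
        congr 2
        exact setLIntegral_congr_fun measurableSet_Ioo fun x hx =>
          (indicator_of_mem (show x ∈ Ioo r x₀ from ⟨hry.trans hx.1, hx.2⟩)
            fun x => ENNReal.ofReal (x ^ (c - 2))).symm
    _ ≤ _ := by
        gcongr
        · exact hk.two_le _ hy (hy.trans_le (hyx.le.trans hz))
        · exact hz.trans (le_add_of_nonneg_left hy.le)

lemma IsMeasureProfile.two_mul_measure_Ici_mul_le [SFinite μ] (hμ : IsMeasureProfile k μ)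
    (hk : IsNearTwo α ε k) {c r x₀ : ℝ} (hc : c < 1) (hr : 0 < r) :
    2 * μ (Ici x₀) * ∫⁻ y in Ioo r x₀, ENNReal.ofReal (y ^ c - x₀ ^ (c - 1) * y) ∂μ ≤
      ENNReal.ofReal (1 - c) * ∫⁻ x in Ioo r x₀, ENNReal.ofReal (x ^ c) ∂μ := by
  rw [← lintegral_sq_mul_indicator_rpow hμ.ae_pos c measurableSet_Ioo,
    hμ.lintegral_sq_mul hk.measurable (Measurable.indicator (by fun_prop) measurableSet_Ioo),
    ← lintegral_const_mul' _ _ ENNReal.ofReal_ne_top]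
  calc 2 * μ (Ici x₀) * ∫⁻ y in Ioo r x₀, ENNReal.ofReal (y ^ c - x₀ ^ (c - 1) * y) ∂μ
      = ∫⁻ p in Ioo r x₀ ×ˢ Ici x₀, ENNReal.ofReal (p.1 ^ c - x₀ ^ (c - 1) * p.1) * 2
          ∂μ.prod μ := by
        rw [← Measure.prod_restrict, lintegral_prod_mul
          (f := fun y => ENNReal.ofReal (y ^ c - x₀ ^ (c - 1) * y)) (g := fun _ => 2)
          (by fun_prop) (by fun_prop), setLIntegral_const]
        ring
    _ ≤ _ := (setLIntegral_mono' (measurableSet_Ioo.prod measurableSet_Ici) fun p hp =>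
        hk.le_mul_lintegral_indicator_rpow hc hr hp).trans (setLIntegral_le_lintegral _ _)

lemma rpow_le_rpow_sub_one_mul {c r x : ℝ} (hc : c ≤ 1) (hr : 0 < r) (hx : r ≤ x) :
    x ^ c ≤ r ^ (c - 1) * x :=
  calc x ^ c = x ^ (c - 1) * x := by
        rw [← rpow_add_one (hr.trans_le hx).ne', sub_add_cancel]
    _ ≤ r ^ (c - 1) * x := mul_le_mul_of_nonneg_right
        (rpow_le_rpow_of_nonpos hr hx (sub_nonpos.2 hc)) (hr.le.trans hx)

lemma IsMeasureProfile.setLIntegral_const_mul_le (hμ : IsMeasureProfile k μ) {c : ℝ} (hc : 0 ≤ c)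
    (s : Set ℝ) : ∫⁻ x in s, ENNReal.ofReal (c * x) ∂μ ≤ ENNReal.ofReal c := by
  refine (setLIntegral_le_lintegral _ _).trans_eq ?_
  simp only [ENNReal.ofReal_mul hc]
  rw [lintegral_const_mul _ (by fun_prop), hμ.lintegral_id, mul_one]

lemma IsMeasureProfile.setLIntegral_rpow_le (hμ : IsMeasureProfile k μ) {c r : ℝ} (hc : c ≤ 1)
    (hr : 0 < r) {s : Set ℝ} (hs : MeasurableSet s) (hsr : s ⊆ Ici r) :
    ∫⁻ x in s, ENNReal.ofReal (x ^ c) ∂μ ≤ ENNReal.ofReal (r ^ (c - 1)) :=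
  (setLIntegral_mono' hs fun _ hx =>
    ENNReal.ofReal_le_ofReal (rpow_le_rpow_sub_one_mul hc hr (hsr hx))).trans
    (hμ.setLIntegral_const_mul_le (by positivity) s)

lemma IsMeasureProfile.mul_setLIntegral_Ioo_rpow_le [SFinite μ] (hμ : IsMeasureProfile k μ)
    (hk : IsNearTwo α ε k) {c η r x₀ : ℝ} (hc : c < 1) (hη : 0 ≤ η) (hr : 0 < r) (hx₀ : 0 < x₀)
    (hθ : ENNReal.ofReal (1 - c + η) ≤ 2 * μ (Ici x₀)) :
    ENNReal.ofReal η * ∫⁻ x in Ioo r x₀, ENNReal.ofReal (x ^ c) ∂μ ≤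
      2 * ENNReal.ofReal (x₀ ^ (c - 1)) := by
  set I := ∫⁻ x in Ioo r x₀, ENNReal.ofReal (x ^ c) ∂μ
  have hI : I ≠ ∞ := ((hμ.setLIntegral_rpow_le hc.le hr measurableSet_Ioo
    fun x hx => hx.1.le).trans_lt ENNReal.ofReal_lt_top).ne
  have hsplit : I ≤ ∫⁻ x in Ioo r x₀, ENNReal.ofReal (x ^ c - x₀ ^ (c - 1) * x) ∂μ +
      ENNReal.ofReal (x₀ ^ (c - 1)) :=
    calc I ≤ ∫⁻ x in Ioo r x₀, ENNReal.ofReal (x ^ c - x₀ ^ (c - 1) * x) +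
          ENNReal.ofReal (x₀ ^ (c - 1) * x) ∂μ := lintegral_mono fun x => by
          simpa only [sub_add_cancel] using
            ENNReal.ofReal_add_le (p := x ^ c - x₀ ^ (c - 1) * x) (q := x₀ ^ (c - 1) * x)
      _ ≤ _ := by
          rw [lintegral_add_left (by fun_prop)]
          gcongr
          exact hμ.setLIntegral_const_mul_le (by positivity) _
  have hθ' : 2 * μ (Ici x₀) ≤ 2 := mul_le_of_le_one_right' <|
    (measure_mono (subset_univ _)).trans (hμ.measure_univ_le_one hk)
  refine ENNReal.le_of_add_le_add_left (ENNReal.mul_ne_top ENNReal.ofReal_ne_top hI) (a :=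
    ENNReal.ofReal (1 - c) * I) ?_
  calc ENNReal.ofReal (1 - c) * I + ENNReal.ofReal η * I
      = ENNReal.ofReal (1 - c + η) * I := by
        rw [ENNReal.ofReal_add (by linarith) hη, add_mul]
    _ ≤ 2 * μ (Ici x₀) * (∫⁻ x in Ioo r x₀, ENNReal.ofReal (x ^ c - x₀ ^ (c - 1) * x) ∂μ +
          ENNReal.ofReal (x₀ ^ (c - 1))) := by gcongr
    _ ≤ ENNReal.ofReal (1 - c) * I + 2 * ENNReal.ofReal (x₀ ^ (c - 1)) := by
        rw [mul_add]
        refine add_le_add ?_ (by gcongr)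
        exact hμ.two_mul_measure_Ici_mul_le hk hc hr

lemma setLIntegral_Ioo_zero_le_of_forall {f : ℝ → ℝ≥0∞} {x₀ : ℝ} {B : ℝ≥0∞}
    (h : ∀ r, 0 < r → ∫⁻ x in Ioo r x₀, f x ∂μ ≤ B) : ∫⁻ x in Ioo 0 x₀, f x ∂μ ≤ B := by
  have hunion : Ioo 0 x₀ = ⋃ n : ℕ, Ioo (1 / ((n : ℝ) + 1)) x₀ := by
    ext x
    simp only [mem_Ioo, mem_iUnion]
    refine ⟨fun hx => ?_, fun ⟨n, hn, hx⟩ => ⟨lt_trans (by positivity) hn, hx⟩⟩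
    obtain ⟨n, hn⟩ := exists_nat_one_div_lt hx.1
    exact ⟨n, hn, hx.2⟩
  have hmono : Monotone fun n : ℕ => Ioo (1 / ((n : ℝ) + 1)) x₀ := fun m n hmn => by
    dsimp only
    gcongr
  rw [hunion, setLIntegral_iUnion_of_directed _ hmono.directed_le]
  exact iSup_le fun n => h _ (by positivity)

lemma IsMeasureProfile.rpowMoment_le [SFinite μ] (hμ : IsMeasureProfile k μ)
    (hk : IsNearTwo α ε k) {c η x₀ : ℝ} (hc : c < 1) (hη : 0 < η) (hx₀ : 0 < x₀)
    (hθ : ENNReal.ofReal (1 - c + η) ≤ 2 * μ (Ici x₀)) :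
    rpowMoment μ c ≤ (2 / ENNReal.ofReal η + 1) * ENNReal.ofReal (x₀ ^ (c - 1)) := by
  have hη' : ENNReal.ofReal η ≠ 0 := (ENNReal.ofReal_pos.2 hη).ne'
  have hsmall : ∫⁻ x in Ioo 0 x₀, ENNReal.ofReal (x ^ c) ∂μ ≤
      2 / ENNReal.ofReal η * ENNReal.ofReal (x₀ ^ (c - 1)) := by
    refine setLIntegral_Ioo_zero_le_of_forall fun r hr => ?_
    rw [ENNReal.mul_comm_div, ← mul_div_assoc, ENNReal.le_div_iff_mul_le (by simp [hη']) (by simp),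
      mul_comm]
    exact hμ.mul_setLIntegral_Ioo_rpow_le hk hc hη.le hr hx₀ hθ
  have hlarge : ∫⁻ x in Ici x₀, ENNReal.ofReal (x ^ c) ∂μ ≤ ENNReal.ofReal (x₀ ^ (c - 1)) :=
    hμ.setLIntegral_rpow_le hc.le hx₀ measurableSet_Ici Subset.rfl
  calc rpowMoment μ c = ∫⁻ x in Ioi 0, ENNReal.ofReal (x ^ c) ∂μ := by
        rw [rpowMoment, Measure.restrict_eq_self_of_ae_mem (s := Ioi 0) hμ.ae_pos]
    _ ≤ ∫⁻ x in Ioo 0 x₀, ENNReal.ofReal (x ^ c) ∂μ +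
          ∫⁻ x in Ici x₀, ENNReal.ofReal (x ^ c) ∂μ := by
        rw [← Ioo_union_Ici_eq_Ioi hx₀]
        exact lintegral_union_le _ _ _
    _ ≤ _ := by
        rw [add_mul, one_mul]
        gcongr

lemma exists_one_sub_le_measure_Ici (hα : α ∈ Ico 0 1) {d : ℝ} (hd : 0 < d) :
    ∃ ε₀ > 0, ∃ x₀ > 0, ∀ (ε : ℝ) (k : ℝ × ℝ → ℝ≥0∞) (μ : Measure ℝ) [SFinite μ],
      ε ∈ Icc 0 ε₀ → IsNearTwo α ε k → IsMeasureProfile k μ →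
        ENNReal.ofReal (1 - 3 * d) ≤ μ (Ici x₀) := by
  obtain ⟨C, hC⟩ := exists_div_sub_le_desingLaplace hα
  refine ⟨min 1 (d ^ 3 / (C + 1)), by positivity, d ^ 2, by positivity,
    fun ε k μ _ ⟨hε, hε'⟩ hk hμ => ?_⟩
  obtain ⟨hε₁, hεd⟩ := le_min_iff.1 hε'
  have hQ := hC ε k μ ⟨hε, hε₁⟩ hk hμ d⁻¹ (by positivity)
  have hmain : 1 - d ≤ d⁻¹ / (1 + d⁻¹) := by
    rw [le_div_iff₀ (by positivity)]
    field_simp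
    nlinarith
  have herr : ε * C * d⁻¹ ^ 2 ≤ d := by
    rw [le_div_iff₀ (by positivity)] at hεd
    field_simp
    nlinarith
  have hIci := desingLaplace_le_add_measure_Ici hμ.ae_pos hμ.integrable_id
    (hμ.measure_univ_le_one hk) (inv_nonneg.2 hd.le) (d ^ 2)
  rw [show d⁻¹ * d ^ 2 = d by field_simp] at hIci
  refine (ENNReal.ofReal_le_ofReal (by linarith : 1 - 3 * d ≤ desingLaplace μ d⁻¹ - d)).trans ?_
  rw [ENNReal.ofReal_sub _ hd.le]
  exact tsub_le_iff_left.2 hIci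

theorem exists_rpowMoment_le_of_mem_Ioo (hα : α ∈ Ico 0 1) {c : ℝ} (hc : c ∈ Ioo (-1) 1) :
    ∃ ε₀ > 0, ∃ C : ℝ≥0, ∀ (ε : ℝ) (k : ℝ × ℝ → ℝ≥0∞) (μ : Measure ℝ) [SFinite μ],
      ε ∈ Icc 0 ε₀ → IsNearTwo α ε k → IsMeasureProfile k μ → rpowMoment μ c ≤ C := by
  have hη : 0 < (1 + c) / 2 := by linarith [hc.1]
  obtain ⟨ε₀, hε₀, x₀, hx₀, hθ⟩ := exists_one_sub_le_measure_Ici hα (d := (1 + c) / 12)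
    (by linarith [hc.1])
  refine ⟨ε₀, hε₀, (2 / ((1 + c) / 2).toNNReal + 1) * (x₀ ^ (c - 1)).toNNReal,
    fun ε k μ _ hε hk hμ => ?_⟩
  refine (hμ.rpowMoment_le hk hc.2 hη hx₀ ?_).trans_eq ?_
  · refine le_trans ?_ (mul_le_mul_right (hθ ε k μ hε hk hμ) 2)
    rw [← ENNReal.ofReal_ofNat 2, ← ENNReal.ofReal_mul zero_le_two]
    exact ENNReal.ofReal_le_ofReal (by linarith)
  · rw [ENNReal.coe_mul, ENNReal.coe_add, ENNReal.coe_div (Real.toNNReal_pos.2 hη).ne']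
    rfl

end NegativeMoments

section WeakConvergence

variable {ι : Type*} {l : Filter ι}

lemma integrable_of_ae_mem_Icc {P : Measure ℝ} [IsFiniteMeasure P] {f : ℝ → ℝ} {u v : ℝ}
    (hP : ∀ᵐ s ∂P, s ∈ Icc u v) (hf : Continuous f) : Integrable f P := by
  rw [← Measure.restrict_eq_self_of_ae_mem hP]
  exact hf.continuousOn.integrableOn_compact isCompact_Icc

lemma tendsto_integral_polynomial {P : ι → Measure ℝ} {P₀ : Measure ℝ}
    [∀ i, IsFiniteMeasure (P i)] [IsFiniteMeasure P₀] {u v : ℝ}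
    (hP : ∀ i, ∀ᵐ s ∂P i, s ∈ Icc u v) (hP₀ : ∀ᵐ s ∂P₀, s ∈ Icc u v)
    (hpow : ∀ n : ℕ, Tendsto (fun i => ∫ s, s ^ n ∂P i) l (𝓝 (∫ s, s ^ n ∂P₀)))
    (q : Polynomial ℝ) :
    Tendsto (fun i => ∫ s, q.eval s ∂P i) l (𝓝 (∫ s, q.eval s ∂P₀)) := by
  have hsum (P' : Measure ℝ) [IsFiniteMeasure P'] (hP' : ∀ᵐ s ∂P', s ∈ Icc u v) :
      ∫ s, q.eval s ∂P' = ∑ n ∈ Finset.range (q.natDegree + 1), q.coeff n * ∫ s, s ^ n ∂P' := by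
    simp only [Polynomial.eval_eq_sum_range, ← integral_const_mul]
    exact integral_finsetSum _ fun n _ => integrable_of_ae_mem_Icc hP' (by fun_prop)
  simp only [hsum P₀ hP₀, fun i => hsum (P i) (hP i)]
  exact tendsto_finsetSum _ fun n _ => (hpow n).const_mul _

lemma dist_integral_le_of_ae_mem {P : Measure ℝ} [IsProbabilityMeasure P] {f g : ℝ → ℝ}
    {s : Set ℝ} {η : ℝ} (hP : ∀ᵐ x ∂P, x ∈ s) (hf : Integrable f P) (hg : Integrable g P)
    (hfg : ∀ x ∈ s, |g x - f x| < η) : dist (∫ x, f x ∂P) (∫ x, g x ∂P) ≤ η := by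
  rw [dist_comm, dist_eq_norm, ← integral_sub hg hf]
  simpa only [probReal_univ, mul_one] using norm_integral_le_of_norm_le_const
    (f := fun x => g x - f x) (hP.mono fun x hx => (hfg x hx).le)

theorem tendsto_of_tendsto_integral_pow {P : ι → ProbabilityMeasure ℝ} {P₀ : ProbabilityMeasure ℝ}
    {u v : ℝ} (hP : ∀ i, ∀ᵐ s ∂(P i : Measure ℝ), s ∈ Icc u v)
    (hP₀ : ∀ᵐ s ∂(P₀ : Measure ℝ), s ∈ Icc u v)
    (hpow : ∀ n : ℕ, Tendsto (fun i => ∫ s, s ^ n ∂(P i : Measure ℝ)) l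
      (𝓝 (∫ s, s ^ n ∂(P₀ : Measure ℝ)))) : Tendsto P l (𝓝 P₀) := by
  refine ProbabilityMeasure.tendsto_iff_forall_integral_tendsto.2 fun f =>
    Metric.tendsto_nhds.2 fun η hη => ?_
  obtain ⟨q, hq⟩ := exists_polynomial_near_of_continuousOn u v f f.continuous.continuousOn (η / 4)
    (by positivity)
  have happrox (P' : ProbabilityMeasure ℝ) (hP' : ∀ᵐ s ∂(P' : Measure ℝ), s ∈ Icc u v) :
      dist (∫ s, f s ∂(P' : Measure ℝ)) (∫ s, q.eval s ∂(P' : Measure ℝ)) ≤ η / 4 :=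
    dist_integral_le_of_ae_mem hP' (integrable_of_ae_mem_Icc hP' f.continuous)
      (integrable_of_ae_mem_Icc hP' q.continuous) hq
  filter_upwards [Metric.tendsto_nhds.1 (tendsto_integral_polynomial hP hP₀ hpow q) (η / 4)
    (by positivity)] with i hi
  have htri := dist_triangle4 (∫ s, f s ∂(P i : Measure ℝ)) (∫ s, q.eval s ∂(P i : Measure ℝ))
    (∫ s, q.eval s ∂(P₀ : Measure ℝ)) (∫ s, f s ∂(P₀ : Measure ℝ))
  have hlim := happrox P₀ hP₀
  rw [dist_comm] at hlim
  linarith [happrox (P i) (hP i)]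

/-- The image of a probability measure on the half-line under `x ↦ e ^ (-x)`. Its moments are
values of the Laplace transform, and it lives on the compact interval `[0, 1]`. -/
noncomputable def mapExpNeg (P : ProbabilityMeasure ℝ) : ProbabilityMeasure ℝ :=
  P.map (f := fun x => exp (-x)) (by fun_prop)

lemma toMeasure_mapExpNeg (P : ProbabilityMeasure ℝ) :
    (mapExpNeg P : Measure ℝ) = (P : Measure ℝ).map fun x => exp (-x) :=
  ProbabilityMeasure.toMeasure_map P _

theorem tendsto_mapExpNeg {P : ι → ProbabilityMeasure ℝ} {P₀ : ProbabilityMeasure ℝ}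
    (hP : ∀ i, ∀ᵐ x ∂(P i : Measure ℝ), 0 ≤ x) (hP₀ : ∀ᵐ x ∂(P₀ : Measure ℝ), 0 ≤ x)
    (hlap : ∀ n : ℕ, Tendsto (fun i => ∫ x, exp (-(n * x)) ∂(P i : Measure ℝ)) l
      (𝓝 (∫ x, exp (-(n * x)) ∂(P₀ : Measure ℝ)))) :
    Tendsto (fun i => mapExpNeg (P i)) l (𝓝 (mapExpNeg P₀)) := by
  have hmem (P : ProbabilityMeasure ℝ) (hP : ∀ᵐ x ∂(P : Measure ℝ), 0 ≤ x) :
      ∀ᵐ s ∂(mapExpNeg P : Measure ℝ), s ∈ Icc 0 1 := by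
    rw [toMeasure_mapExpNeg]
    refine (ae_map_iff (p := (· ∈ Icc 0 1)) (by fun_prop) measurableSet_Icc).2 ?_
    exact hP.mono fun x hx => ⟨exp_nonneg _, exp_le_one_iff.2 (neg_nonpos.2 hx)⟩
  have hpow (P : ProbabilityMeasure ℝ) (n : ℕ) :
      ∫ s, s ^ n ∂(mapExpNeg P : Measure ℝ) = ∫ x, exp (-(n * x)) ∂(P : Measure ℝ) := by
    rw [toMeasure_mapExpNeg, integral_map (by fun_prop) (by fun_prop)]
    simp only [← exp_nat_mul, mul_neg]
  refine tendsto_of_tendsto_integral_pow (fun i => hmem _ (hP i)) (hmem _ hP₀) fun n => ?_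
  simpa only [hpow] using hlap n

lemma frontier_lt_inter_lt_subset {X : Type*} [TopologicalSpace X] {f g : X → ℝ}
    (hf : Continuous f) (hg : Continuous g) (c : ℝ) :
    frontier {p | c < f p ∧ g p < c} ⊆ {p | f p = c} ∪ {p | g p = c} := by
  refine (frontier_inter_subset {p | c < f p} {p | g p < c}).trans (union_subset_union ?_ ?_)
  · exact inter_subset_left.trans fun p hp =>
      (frontier_lt_subset_eq continuous_const hf hp).symm
  · exact inter_subset_right.trans (frontier_lt_subset_eq hg continuous_const)

lemma prod_setOf_fst_eq_null {P P' : Measure ℝ} [SFinite P] [SFinite P'] [NullSingletonClass P]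
    {g : ℝ → ℝ} (hg : Measurable g) : P.prod P' {p | p.1 = g p.2} = 0 := by
  have hS : MeasurableSet {p : ℝ × ℝ | p.1 = g p.2} :=
    measurableSet_eq_fun (by fun_prop) (by fun_prop)
  rw [Measure.prod_apply_symm hS]
  simp only [preimage_ofPred_eq, ofPred_eq_eq_singleton, measure_singleton, lintegral_zero]

theorem tendsto_prod_fluxRegion {P P' : ι → ProbabilityMeasure ℝ} {P₀ P₀' : ProbabilityMeasure ℝ}
    [NullSingletonClass (P₀ : Measure ℝ)]
    (hP : Tendsto (fun i => mapExpNeg (P i)) l (𝓝 (mapExpNeg P₀)))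
    (hP' : Tendsto (fun i => mapExpNeg (P' i)) l (𝓝 (mapExpNeg P₀'))) (x : ℝ) :
    Tendsto (fun i => ((P i : Measure ℝ).prod (P' i)) {p | p.1 < x ∧ x < p.1 + p.2}) l
      (𝓝 (((P₀ : Measure ℝ).prod P₀') {p | p.1 < x ∧ x < p.1 + p.2})) := by
  let G : Set (ℝ × ℝ) := {q | exp (-x) < q.1 ∧ q.1 * q.2 < exp (-x)}
  have hpre (P P' : ProbabilityMeasure ℝ) {S : Set (ℝ × ℝ)} (hS : MeasurableSet S) :
      ((mapExpNeg P).prod (mapExpNeg P') : Measure (ℝ × ℝ)) S =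
        ((P : Measure ℝ).prod P') ((fun p : ℝ × ℝ => (exp (-p.1), exp (-p.2))) ⁻¹' S) := by
    rw [ProbabilityMeasure.toMeasure_prod, toMeasure_mapExpNeg, toMeasure_mapExpNeg,
      Measure.map_prod_map _ _ (by fun_prop) (by fun_prop), Measure.map_apply (by fun_prop) hS]
    rfl
  have hGm : MeasurableSet G := ((isOpen_lt continuous_const continuous_fst).inter
    (isOpen_lt (continuous_fst.mul continuous_snd) continuous_const)).measurableSet
  have hG : (fun p : ℝ × ℝ => (exp (-p.1), exp (-p.2))) ⁻¹' G = {p | p.1 < x ∧ x < p.1 + p.2} := by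
    ext p
    simp only [G, mem_preimage, mem_ofPred_eq, ← exp_add, exp_lt_exp, neg_lt_neg_iff]
    exact and_congr_right' (by rw [← neg_add, neg_lt_neg_iff])
  have hnull : ((mapExpNeg P₀).prod (mapExpNeg P₀') : Measure (ℝ × ℝ)) (frontier G) = 0 := by
    have hS : MeasurableSet ({q : ℝ × ℝ | q.1 = exp (-x)} ∪ {q | q.1 * q.2 = exp (-x)}) :=
      .union (measurableSet_eq_fun (by fun_prop) (by fun_prop))
        (measurableSet_eq_fun (by fun_prop) (by fun_prop))
    refine measure_mono_null (frontier_lt_inter_lt_subset continuous_fst (by fun_prop) _) ?_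
    rw [hpre _ _ hS]
    refine measure_mono_null (fun p hp => ?_) (measure_union_null
      (prod_setOf_fst_eq_null (g := fun _ => x) measurable_const)
      (prod_setOf_fst_eq_null (g := fun z => x - z) (by fun_prop)))
    refine hp.imp (fun h => ?_) fun h => ?_
    · exact neg_injective (exp_injective h)
    · simp only [mem_ofPred_eq, ← exp_add, exp_eq_exp] at h ⊢
      linarith
  have hlim := ProbabilityMeasure.tendsto_measure_of_null_frontier_of_tendsto'
    ((ProbabilityMeasure.continuous_prod.tendsto (mapExpNeg P₀, mapExpNeg P₀')).comp
      (hP.prodMk_nhds hP')) hnull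
  simpa only [Function.comp_def, hpre _ _ hGm, hG] using hlim

end WeakConvergence

section FluxConvergence

/-- The distribution of mass over cluster sizes. Its Laplace transform is `laplaceMass μ`. -/
noncomputable def massMeasure (μ : Measure ℝ) : Measure ℝ :=
  μ.withDensity ENNReal.ofReal

/-- The sub-probability measure `μ` completed to a probability measure by an atom at size `0`. The
atom does not contribute to `massFlux`, as `y < x < y + z` excludes `z = 0`. -/
noncomputable def fillAtZero (μ : Measure ℝ) : Measure ℝ :=
  μ + (1 - μ univ) • Measure.dirac 0

instance [SFinite μ] : SFinite (fillAtZero μ) := by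
  unfold fillAtZero
  infer_instance

lemma isProbabilityMeasure_massMeasure (hμ : ∫⁻ x, ENNReal.ofReal x ∂μ = 1) :
    IsProbabilityMeasure (massMeasure μ) :=
  ⟨by rw [massMeasure, withDensity_apply _ .univ, setLIntegral_univ, hμ]⟩

lemma isProbabilityMeasure_fillAtZero (hμ : μ univ ≤ 1) : IsProbabilityMeasure (fillAtZero μ) :=
  ⟨by simp [fillAtZero, hμ]⟩

lemma ae_massMeasure_nonneg (hμ : ∀ᵐ x ∂μ, 0 < x) : ∀ᵐ x ∂massMeasure μ, 0 ≤ x :=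
  (withDensity_absolutelyContinuous _ _).ae_le (hμ.mono fun _ => le_of_lt)

lemma ae_fillAtZero_nonneg (hμ : ∀ᵐ x ∂μ, 0 < x) : ∀ᵐ x ∂fillAtZero μ, 0 ≤ x :=
  ae_add_measure_iff.2 ⟨hμ.mono fun _ => le_of_lt,
    Measure.ae_smul_measure ((ae_dirac_iff measurableSet_Ici).2 le_rfl) _⟩

lemma integral_exp_neg_massMeasure (hμ : ∀ᵐ x ∂μ, 0 < x) (p : ℝ) :
    ∫ x, exp (-(p * x)) ∂massMeasure μ = laplaceMass μ p := by
  rw [massMeasure, integral_withDensity_eq_integral_toReal_smul (by fun_prop) (by simp),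
    laplaceMass]
  refine integral_congr_ae (hμ.mono fun x hx => ?_)
  simp only [ENNReal.toReal_ofReal hx.le, smul_eq_mul]

lemma integral_exp_neg_fillAtZero (hpos : ∀ᵐ x ∂μ, 0 < x) (hint : Integrable (fun x => x) μ)
    (hμ : μ univ ≤ 1) {p : ℝ} (hp : 0 ≤ p) :
    ∫ x, exp (-(p * x)) ∂fillAtZero μ = 1 - desingLaplace μ p := by
  have : IsFiniteMeasure μ := ⟨hμ.trans_lt ENNReal.one_lt_top⟩
  have hexp : Integrable (fun x => exp (-(p * x))) μ := by
    simpa only [sub_sub_cancel] using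
      (integrable_const (1 : ℝ)).sub' (integrable_one_sub_exp_neg hpos hint hp)
  have hdirac : Integrable (fun x => exp (-(p * x))) ((1 - μ univ) • Measure.dirac (0 : ℝ)) :=
    (integrable_dirac (by simp)).smul_measure (by simp)
  rw [fillAtZero, integral_add_measure hexp hdirac, integral_smul_measure, integral_dirac,
    desingLaplace, integral_sub (integrable_const 1) hexp, ENNReal.toReal_sub_of_le hμ (by simp)]
  simp only [mul_zero, neg_zero, exp_zero, integral_const, Measure.real, ENNReal.toReal_one,
    smul_eq_mul, mul_one]
  ring

lemma massFlux_two [SFinite μ] (x : ℝ) :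
    massFlux (fun _ => 2) μ x =
      2 * ((massMeasure μ).prod (fillAtZero μ)) {p | p.1 < x ∧ x < p.1 + p.2} := by
  have hfill (y : ℝ) : fillAtZero μ (Prod.mk y ⁻¹' {p | p.1 < x ∧ x < p.1 + p.2}) =
      (Iio x).indicator (fun y => μ (Ioi (x - y))) y := by
    by_cases hy : y < x
    · have hset : Prod.mk y ⁻¹' {p | p.1 < x ∧ x < p.1 + p.2} = Ioi (x - y) := by
        ext z
        simp only [mem_preimage, mem_ofPred_eq, hy, true_and, mem_Ioi, sub_lt_iff_lt_add']
      simp [hset, fillAtZero, hy, hy.le]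
    · simp [hy]
  have hmeas :=
    measurable_measure_prodMk_left (ν := fillAtZero μ) (measurableSet_fluxRegion_right x)
  rw [massFlux_eq_lintegral_lintegral measurable_const,
    Measure.prod_apply (measurableSet_fluxRegion_right x), massMeasure,
    lintegral_withDensity_eq_lintegral_mul _ ENNReal.measurable_ofReal hmeas,
    ← lintegral_const_mul _ (ENNReal.measurable_ofReal.mul hmeas),
    ← lintegral_indicator measurableSet_Iio]
  refine lintegral_congr fun y => ?_
  by_cases hy : y < x
  · simp only [hfill, setLIntegral_const, indicator_of_mem (show y ∈ Iio x from hy), Pi.mul_apply]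
    ring
  · simp [hy]

theorem tendsto_massFlux_two {ι : Type*} {l : Filter ι} {μ : ι → Measure ℝ} {μ₀ : Measure ℝ}
    [∀ i, SFinite (μ i)] [SFinite μ₀] [NullSingletonClass μ₀]
    (hμ : ∀ i, ∀ᵐ x ∂μ i, 0 < x) (hμ₀ : ∀ᵐ x ∂μ₀, 0 < x)
    (hmass : ∀ i, ∫⁻ x, ENNReal.ofReal x ∂μ i = 1) (hmass₀ : ∫⁻ x, ENNReal.ofReal x ∂μ₀ = 1)
    (hone : ∀ i, μ i univ ≤ 1) (hone₀ : μ₀ univ ≤ 1)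
    (hlap : ∀ n : ℕ, Tendsto (fun i => desingLaplace (μ i) n) l (𝓝 (desingLaplace μ₀ n)))
    (hlap' : ∀ n : ℕ, Tendsto (fun i => laplaceMass (μ i) n) l (𝓝 (laplaceMass μ₀ n))) (x : ℝ) :
    Tendsto (fun i => massFlux (fun _ => 2) (μ i) x) l (𝓝 (massFlux (fun _ => 2) μ₀ x)) := by
  have hprob i := isProbabilityMeasure_massMeasure (hmass i)
  have hprob₀ := isProbabilityMeasure_massMeasure hmass₀
  have hfill i := isProbabilityMeasure_fillAtZero (hone i)
  have hfill₀ := isProbabilityMeasure_fillAtZero hone₀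
  have hint_of {ν : Measure ℝ} (hν : ∀ᵐ x ∂ν, 0 < x) (hν₁ : ∫⁻ x, ENNReal.ofReal x ∂ν = 1) :
      Integrable (fun x => x) ν :=
    (lintegral_ofReal_ne_top_iff_integrable (by fun_prop) (hν.mono fun _ => le_of_lt)).1 <| by
      simp [hν₁]
  have hint i : Integrable (fun x => x) (μ i) := hint_of (hμ i) (hmass i)
  have hint₀ : Integrable (fun x => x) μ₀ := hint_of hμ₀ hmass₀
  let P₀ : ProbabilityMeasure ℝ := ⟨massMeasure μ₀, hprob₀⟩
  have hconv : Tendsto (fun i => mapExpNeg ⟨massMeasure (μ i), hprob i⟩) l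
      (𝓝 (mapExpNeg P₀)) :=
    tendsto_mapExpNeg (fun i => ae_massMeasure_nonneg (hμ i)) (ae_massMeasure_nonneg hμ₀) <| by
      simpa only [P₀, ProbabilityMeasure.coe_mk, integral_exp_neg_massMeasure, hμ, hμ₀] using hlap'
  have hconv' : Tendsto (fun i => mapExpNeg ⟨fillAtZero (μ i), hfill i⟩) l
      (𝓝 (mapExpNeg ⟨fillAtZero μ₀, hfill₀⟩)) :=
    tendsto_mapExpNeg (fun i => ae_fillAtZero_nonneg (hμ i)) (ae_fillAtZero_nonneg hμ₀) fun n => by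
      simpa only [ProbabilityMeasure.coe_mk, integral_exp_neg_fillAtZero (hμ _) (hint _) (hone _)
        n.cast_nonneg, integral_exp_neg_fillAtZero hμ₀ hint₀ hone₀ n.cast_nonneg]
        using (hlap n).const_sub 1
  have : NullSingletonClass (P₀ : Measure ℝ) := nullSingletonClass_withDensity _
  simp only [massFlux_two]
  exact ENNReal.Tendsto.const_mul (tendsto_prod_fluxRegion hconv hconv' x)
    (.inr ENNReal.ofNat_ne_top)

end FluxConvergence

section VanishingPerturbation

lemma massFlux_mono {k' : ℝ × ℝ → ℝ≥0∞} (h : ∀ᵐ p ∂μ.prod μ, k p ≤ k' p) (x : ℝ) :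
    massFlux k μ x ≤ massFlux k' μ x :=
  lintegral_mono_ae (ae_restrict_of_ae (h.mono fun _ hp => mul_le_mul_right hp _))

lemma IsNearTwo.massFlux_two_le (hk : IsNearTwo α ε k) (hμ : ∀ᵐ x ∂μ, 0 < x) (x : ℝ) :
    massFlux (fun _ => 2) μ x ≤ massFlux k μ x :=
  massFlux_mono ((ae_prod_pos hμ).mono fun p hp => hk.two_le p hp.1 hp.2) x

lemma IsNearTwo.massFlux_le (hk : IsNearTwo α ε k) (hε : 0 ≤ ε)
    (hμ : ∀ᵐ x ∂μ, 0 < x) (x : ℝ) :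
    massFlux k μ x ≤
      massFlux (fun _ => 2) μ x + ENNReal.ofReal ε * massFlux (ratioKernel α) μ x := by
  refine (massFlux_mono ((ae_prod_pos hμ).mono fun p hp =>
    hk.le_ratioKernel hε hp.1 hp.2) x).trans_eq ?_
  simp only [massFlux, mul_add]
  rw [lintegral_add_left (by fun_prop), ← lintegral_const_mul _ (by fun_prop)]
  simp only [mul_left_comm (ENNReal.ofReal ε)]

lemma IsNearTwo.massFlux_eq_two (hk : IsNearTwo α 0 k) (hμ : ∀ᵐ x ∂μ, 0 < x) (x : ℝ) :
    massFlux k μ x = massFlux (fun _ => 2) μ x :=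
  le_antisymm (by simpa using hk.massFlux_le le_rfl hμ x) (hk.massFlux_two_le hμ x)

lemma massFlux_two_le_two [SFinite μ] (hmass : ∫⁻ x, ENNReal.ofReal x ∂μ = 1)
    (hone : μ univ ≤ 1) (x : ℝ) : massFlux (fun _ => 2) μ x ≤ 2 := by
  have := isProbabilityMeasure_massMeasure hmass
  have := isProbabilityMeasure_fillAtZero hone
  rw [massFlux_two]
  exact mul_le_of_le_one_right' prob_le_one

lemma setLIntegral_massFlux_ratioKernel [SFinite μ] (hμ : ∀ᵐ x ∂μ, 0 < x) :
    ∫⁻ x in Ioi 0, massFlux (ratioKernel α) μ x =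
      2 * (rpowMoment μ (1 + α) * rpowMoment μ (1 - α)) := by
  rw [setLIntegral_massFlux measurable_ratioKernel measurableSet_Ioi subset_rfl,
    ← lintegral_ratioKernel_mul hμ]
  refine lintegral_congr_ae ?_
  filter_upwards [ae_prod_pos hμ] with p hp
  have hsub : Ioo p.1 (p.1 + p.2) ⊆ Ioi 0 := fun x hx => hp.1.trans hx.1
  rw [inter_eq_left.2 hsub, volume_Ioo, add_sub_cancel_left]
  ring

variable {ι : Type*} {l : Filter ι} {e : ι → ℝ} {κ : ι → ℝ × ℝ → ℝ≥0∞} {ν : ι → Measure ℝ}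
  [∀ i, SFinite (ν i)]

theorem tendsto_desingLaplace (hα : α ∈ Ico 0 1) (he : Tendsto e l (𝓝[≥] 0))
    (hκ : ∀ i, IsNearTwo α (e i) (κ i)) (hν : ∀ i, IsMeasureProfile (κ i) (ν i)) {p : ℝ}
    (hp : 0 < p) : Tendsto (fun i => desingLaplace (ν i) p) l (𝓝 (p / (1 + p))) := by
  obtain ⟨C, hC⟩ := exists_div_sub_le_desingLaplace hα
  have hlim : Tendsto (fun i => p / (1 + p) - e i * C * p ^ 2) l (𝓝 (p / (1 + p))) := by
    simpa using (((tendsto_nhds_of_tendsto_nhdsWithin he).mul_const (C : ℝ)).mul_const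
      (p ^ 2)).const_sub (p / (1 + p))
  refine tendsto_of_tendsto_of_tendsto_of_le_of_le' hlim tendsto_const_nhds ?_
    (Eventually.of_forall fun i => (hν i).desingLaplace_le_div (hκ i) hp)
  filter_upwards [he (Icc_mem_nhdsGE one_pos)] with i hi
  exact hC _ _ _ hi (hκ i) (hν i) p hp

theorem tendsto_laplaceMass (hα : α ∈ Ico 0 1) (he : Tendsto e l (𝓝[≥] 0))
    (hκ : ∀ i, IsNearTwo α (e i) (κ i)) (hν : ∀ i, IsMeasureProfile (κ i) (ν i)) {p : ℝ}
    (hp : 0 < p) : Tendsto (fun i => laplaceMass (ν i) p) l (𝓝 (((1 + p) ^ 2)⁻¹)) := by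
  obtain ⟨C, hC⟩ := exists_rpowMoment_mul_le hα
  have hQ := tendsto_desingLaplace hα he hκ hν hp
  have hupper := (hQ.sub (hQ.pow 2)).div_const p
  have hlower := hupper.sub
    ((tendsto_nhds_of_tendsto_nhdsWithin he).mul_const (C * p))
  have hval : (p / (1 + p) - (p / (1 + p)) ^ 2) / p = ((1 + p) ^ 2)⁻¹ := by field_simp; ring
  rw [hval] at hupper
  rw [hval, zero_mul, sub_zero] at hlower
  refine tendsto_of_tendsto_of_tendsto_of_le_of_le' hlower hupper ?_ ?_
  · filter_upwards [he (Icc_mem_nhdsGE one_pos)] with i hi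
    have := (hν i).sub_le_sq_desingLaplace_add (hκ i) hi.1 C.coe_nonneg
      ((hC _ _ _ hi (hκ i) (hν i)).trans_eq ENNReal.ofReal_coe_nnreal.symm) hp.le
    rw [sub_le_iff_le_add, div_le_iff₀ hp]
    linarith
  · refine Eventually.of_forall fun i => ?_
    rw [le_div_iff₀' hp]
    linarith [(hν i).sq_desingLaplace_le (hκ i) hp.le]

theorem tendsto_massFlux_two_of_isNearTwo (hα : α ∈ Ico 0 1) (he : Tendsto e l (𝓝[≥] 0))
    (hκ : ∀ i, IsNearTwo α (e i) (κ i)) (hν : ∀ i, IsMeasureProfile (κ i) (ν i))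
    [SFinite μ] [NullSingletonClass μ] (hk : IsNearTwo α 0 k) (hμ : IsMeasureProfile k μ) (x : ℝ) :
    Tendsto (fun i => massFlux (fun _ => 2) (ν i) x) l (𝓝 (massFlux (fun _ => 2) μ x)) := by
  have hzero : Tendsto (fun _ : ℕ => (0 : ℝ)) atTop (𝓝[≥] 0) :=
    tendsto_nhdsWithin_of_tendsto_nhds_of_eventually_within _ tendsto_const_nhds
      (Eventually.of_forall fun _ => mem_Ici.2 le_rfl)
  refine tendsto_massFlux_two (fun i => (hν i).ae_pos) hμ.ae_pos (fun i => (hν i).lintegral_id)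
    hμ.lintegral_id (fun i => (hν i).measure_univ_le_one (hκ i)) (hμ.measure_univ_le_one hk)
    (fun n => ?_) (fun n => ?_) x <;> rcases n.eq_zero_or_pos with rfl | hn
  · simp [desingLaplace, tendsto_const_nhds]
  · have hn' : (0 : ℝ) < n := Nat.cast_pos.2 hn
    rw [tendsto_const_nhds_iff.1 (tendsto_desingLaplace hα hzero (fun _ => hk) (fun _ => hμ) hn')]
    exact tendsto_desingLaplace hα he hκ hν hn'
  · simp [laplaceMass, (hν _).integral_id, hμ.integral_id, tendsto_const_nhds]
  · have hn' : (0 : ℝ) < n := Nat.cast_pos.2 hn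
    rw [tendsto_const_nhds_iff.1 (tendsto_laplaceMass hα hzero (fun _ => hk) (fun _ => hμ) hn')]
    exact tendsto_laplaceMass hα he hκ hν hn'

end VanishingPerturbation

section LocalConvergence

variable {K K₀ : ℝ → ℝ → ℝ} {φ φ₀ : ℝ → ℝ}

instance : NullSingletonClass (profileMeasure φ) := nullSingletonClass_withDensity _

lemma ofReal_abs_sub_le_of_ofReal_mem_Icc {u v : ℝ} {A B r : ℝ≥0∞} (hA : A ≠ ∞) (hu : 0 ≤ u)
    (hv : 0 ≤ v) (hAu : A ≤ ENNReal.ofReal u) (huA : ENNReal.ofReal u ≤ A + r)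
    (hB : ENNReal.ofReal v = B) :
    ENNReal.ofReal |u - v| ≤ r + ENNReal.ofReal |A.toReal - B.toReal| := by
  have hAu' : A.toReal ≤ u := ENNReal.toReal_le_of_le_ofReal hu hAu
  have hdist : ENNReal.ofReal (u - A.toReal) ≤ r := by
    rw [ENNReal.ofReal_sub _ ENNReal.toReal_nonneg, ENNReal.ofReal_toReal hA]
    exact tsub_le_iff_left.2 huA
  rw [← hB, ENNReal.toReal_ofReal hv]
  calc ENNReal.ofReal |u - v|
      ≤ ENNReal.ofReal ((u - A.toReal) + |A.toReal - v|) := by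
        refine ENNReal.ofReal_le_ofReal ((abs_sub_le u A.toReal v).trans_eq ?_)
        rw [abs_of_nonneg (sub_nonneg.2 hAu')]
    _ ≤ r + ENNReal.ofReal |A.toReal - v| :=
        ENNReal.ofReal_add_le.trans (by gcongr)

lemma IsProfile.ofReal_abs_sq_mul_sub_le (hprof : IsProfile K φ) (hnorm : IsNormalised φ)
    (hk : IsNearTwo α ε (quadrantKernel K)) (hα : α ∈ Icc 0 1) (hε : 0 ≤ ε)
    (hprof₀ : IsProfile K₀ φ₀) (hnorm₀ : IsNormalised φ₀)
    (hk₀ : IsNearTwo α 0 (quadrantKernel K₀)) :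
    ∀ᵐ x ∂volume.restrict (Ioi 0), ENNReal.ofReal |x ^ 2 * φ x - x ^ 2 * φ₀ x| ≤
      ENNReal.ofReal ε * massFlux (ratioKernel α) (profileMeasure φ) x +
        ENNReal.ofReal |(massFlux (fun _ => 2) (profileMeasure φ) x).toReal -
          (massFlux (fun _ => 2) (profileMeasure φ₀) x).toReal| := by
  have hμ := hprof.isMeasureProfile hnorm hk hα hε
  filter_upwards [hprof.ofReal_sq_mul_eq_massFlux hnorm hk hα hε,
    hprof₀.ofReal_sq_mul_eq_massFlux hnorm₀ hk₀ hα le_rfl, hprof.2.1, hprof₀.2.1]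
    with x hx hx₀ hφ hφ₀
  refine ofReal_abs_sub_le_of_ofReal_mem_Icc ?_ (by positivity) (by positivity) ?_ ?_ ?_
  · exact ne_top_of_le_ne_top ENNReal.ofNat_ne_top
      (massFlux_two_le_two hμ.lintegral_id (hμ.measure_univ_le_one hk) x)
  · exact hx ▸ hk.massFlux_two_le hμ.ae_pos x
  · exact hx ▸ hk.massFlux_le hε hμ.ae_pos x
  · exact hx₀.trans (hk₀.massFlux_eq_two ae_profileMeasure_pos x)

variable {ι : Type*} {l : Filter ι} [l.IsCountablyGenerated] {e : ι → ℝ} {L : ι → ℝ → ℝ → ℝ}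
  {ψ : ι → ℝ → ℝ}

theorem tendsto_setLIntegral_abs_toReal_massFlux_sub {κ : ι → ℝ × ℝ → ℝ≥0∞} {ν : ι → Measure ℝ}
    [∀ i, SFinite (ν i)] (hα : α ∈ Ico 0 1) (he : Tendsto e l (𝓝[≥] 0))
    (hκ : ∀ i, IsNearTwo α (e i) (κ i)) (hν : ∀ i, IsMeasureProfile (κ i) (ν i))
    [SFinite μ] [NullSingletonClass μ] (hk : IsNearTwo α 0 k) (hμ : IsMeasureProfile k μ)
    {s : Set ℝ} (hs : volume s ≠ ∞) :
    Tendsto (fun i => ∫⁻ x in s, ENNReal.ofReal |(massFlux (fun _ => 2) (ν i) x).toReal -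
      (massFlux (fun _ => 2) μ x).toReal|) l (𝓝 0) := by
  have hle {μ : Measure ℝ} [SFinite μ] {k : ℝ × ℝ → ℝ≥0∞} {ε : ℝ} (hk : IsNearTwo α ε k)
      (hμ : IsMeasureProfile k μ) (x : ℝ) : massFlux (fun _ => 2) μ x ≤ 2 :=
    massFlux_two_le_two hμ.lintegral_id (hμ.measure_univ_le_one hk) x
  have hmeas {μ : Measure ℝ} [SFinite μ] : Measurable (massFlux (fun _ => 2) μ) :=
    measurable_massFlux measurable_const
  rw [← lintegral_zero (μ := volume.restrict s)]
  refine tendsto_lintegral_filter_of_dominated_convergence (fun _ => 2)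
    (Eventually.of_forall fun i => ?_) (Eventually.of_forall fun i => ae_of_all _ fun x => ?_) ?_
    (ae_of_all _ fun x => ?_)
  · exact (hmeas.ennreal_toReal.sub hmeas.ennreal_toReal).abs.ennreal_ofReal
  · refine (ENNReal.ofReal_le_ofReal (abs_sub_le_of_nonneg_of_le ENNReal.toReal_nonneg
      (ENNReal.toReal_mono ENNReal.ofNat_ne_top (hle (hκ i) (hν i) x)) ENNReal.toReal_nonneg
      (ENNReal.toReal_mono ENNReal.ofNat_ne_top (hle hk hμ x)))).trans_eq ?_
    exact ENNReal.ofReal_ofNat 2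
  · rw [setLIntegral_const]
    exact ENNReal.mul_ne_top ENNReal.ofNat_ne_top hs
  · have hlim := (ENNReal.tendsto_toReal (ne_top_of_le_ne_top ENNReal.ofNat_ne_top
      (hle hk hμ x))).comp (tendsto_massFlux_two_of_isNearTwo hα he hκ hν hk hμ x)
    simpa using ENNReal.tendsto_ofReal
      (hlim.sub_const (massFlux (fun _ => 2) μ x).toReal).abs

theorem tendsto_setLIntegral_abs_sq_mul_sub (hα : α ∈ Ico 0 1) (he₀ : ∀ i, 0 ≤ e i)
    (he : Tendsto e l (𝓝 0)) (hL : ∀ i, IsNearTwo α (e i) (quadrantKernel (L i)))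
    (hψ : ∀ i, IsProfile (L i) (ψ i)) (hψ' : ∀ i, IsNormalised (ψ i))
    (hk₀ : IsNearTwo α 0 (quadrantKernel K₀)) (hφ₀ : IsProfile K₀ φ₀) (hφ₀' : IsNormalised φ₀)
    {s : Set ℝ} (hs : s ⊆ Ioi 0) (hs' : volume s ≠ ∞) :
    Tendsto (fun i => ∫⁻ x in s, ENNReal.ofReal |x ^ 2 * ψ i x - x ^ 2 * φ₀ x|) l (𝓝 0) := by
  have hα' : α ∈ Icc 0 1 := Ico_subset_Icc_self hα
  obtain ⟨C, hC⟩ := exists_rpowMoment_mul_le hα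
  have hμ i := (hψ i).isMeasureProfile (hψ' i) (hL i) hα' (he₀ i)
  have he' : Tendsto e l (𝓝[≥] 0) :=
    tendsto_nhdsWithin_of_tendsto_nhds_of_eventually_within _ he (Eventually.of_forall he₀)
  have hpert : Tendsto (fun i => ENNReal.ofReal (e i) * (2 * C)) l (𝓝 0) := by
    simpa using ENNReal.Tendsto.mul_const (b := 2 * (C : ℝ≥0∞)) (ENNReal.tendsto_ofReal he)
      (Or.inr (ENNReal.mul_ne_top ENNReal.ofNat_ne_top ENNReal.coe_ne_top))
  have hflux := tendsto_setLIntegral_abs_toReal_massFlux_sub hα he' hL hμ hk₀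
    (hφ₀.isMeasureProfile hφ₀' hk₀ hα' le_rfl) hs'
  refine tendsto_of_tendsto_of_tendsto_of_le_of_le' tendsto_const_nhds
    (by simpa only [add_zero] using hpert.add hflux) (Eventually.of_forall fun i => zero_le) ?_
  filter_upwards [he' (Icc_mem_nhdsGE one_pos)] with i hi
  have hmeas : Measurable (massFlux (ratioKernel α) (profileMeasure (ψ i))) :=
    measurable_massFlux measurable_ratioKernel
  refine (lintegral_mono_ae (ae_restrict_of_ae_restrict_of_subset hs
    ((hψ i).ofReal_abs_sq_mul_sub_le (hψ' i) (hL i) hα' (he₀ i) hφ₀ hφ₀' hk₀))).trans ?_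
  rw [lintegral_add_left (hmeas.const_mul _), lintegral_const_mul _ hmeas]
  gcongr
  calc ∫⁻ x in s, massFlux (ratioKernel α) (profileMeasure (ψ i)) x
      ≤ ∫⁻ x in Ioi 0, massFlux (ratioKernel α) (profileMeasure (ψ i)) x :=
        lintegral_mono_set hs
    _ ≤ 2 * C := by
        rw [setLIntegral_massFlux_ratioKernel (hμ i).ae_pos]
        gcongr
        exact hC _ _ _ hi (hL i) (hμ i)

theorem tendsto_setLIntegral_abs_sub (hα : α ∈ Ico 0 1) (he₀ : ∀ i, 0 ≤ e i)
    (he : Tendsto e l (𝓝 0)) (hL : ∀ i, IsNearTwo α (e i) (quadrantKernel (L i)))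
    (hψ : ∀ i, IsProfile (L i) (ψ i)) (hψ' : ∀ i, IsNormalised (ψ i))
    (hk₀ : IsNearTwo α 0 (quadrantKernel K₀)) (hφ₀ : IsProfile K₀ φ₀) (hφ₀' : IsNormalised φ₀)
    {r R : ℝ} (hr : 0 < r) :
    Tendsto (fun i => ∫⁻ x in Ioo r R, ENNReal.ofReal |ψ i x - φ₀ x|) l (𝓝 0) := by
  have hsub : Ioo r R ⊆ Ioi 0 := fun x hx => hr.trans hx.1
  have hlim := ENNReal.Tendsto.const_mul (a := ENNReal.ofReal (r ^ 2)⁻¹)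
    (tendsto_setLIntegral_abs_sq_mul_sub hα he₀ he hL hψ hψ' hk₀ hφ₀ hφ₀' hsub
      measure_Ioo_lt_top.ne)
    (Or.inr ENNReal.ofReal_ne_top)
  rw [mul_zero] at hlim
  refine tendsto_of_tendsto_of_tendsto_of_le_of_le tendsto_const_nhds hlim
    (fun i => zero_le) fun i => ?_
  rw [← lintegral_const_mul' _ _ ENNReal.ofReal_ne_top]
  refine setLIntegral_mono' measurableSet_Ioo fun x hx => ?_
  rw [← ENNReal.ofReal_mul (by positivity)]
  refine ENNReal.ofReal_le_ofReal ?_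
  rw [← mul_sub, abs_mul, abs_of_nonneg (sq_nonneg x), ← mul_assoc]
  refine le_mul_of_one_le_left (abs_nonneg _) ?_
  rw [inv_mul_eq_div, one_le_div (by positivity)]
  exact pow_le_pow_left₀ hr.le hx.1.le 2

end LocalConvergence

section Exponential

lemma isNearTwo_quadrantKernel_two : IsNearTwo α 0 (quadrantKernel fun _ _ => 2) :=
  isNearTwo_quadrantKernel
    (measurable_const.indicator (measurableSet_Ioi.prod measurableSet_Ioi))
    (fun _ _ _ _ => rfl) (fun _ _ _ _ => by simp)

lemma integrableOn_mul_exp_neg : IntegrableOn (fun x => x * exp (-x)) (Ioi 0) := by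
  refine (Real.GammaIntegral_convergent two_pos).congr_fun (fun x _ => ?_) measurableSet_Ioi
  norm_num [mul_comm]

lemma isNormalised_exp_neg : IsNormalised fun x => exp (-x) := by
  have h := Real.Gamma_eq_integral two_pos
  rw [Real.Gamma_two] at h
  rw [IsNormalised, h]
  refine setIntegral_congr_fun measurableSet_Ioi fun x _ => ?_
  norm_num [mul_comm]

lemma isProfile_exp_neg : IsProfile (fun _ _ => 2) fun x => exp (-x) := by
  refine ⟨(by fun_prop : Continuous fun x : ℝ => exp (-x)).locallyIntegrable.locallyIntegrableOn _,
    ae_of_all _ fun x => (exp_pos _).le, integrableOn_mul_exp_neg, ?_⟩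
  filter_upwards [ae_restrict_mem measurableSet_Ioi] with x hx
  have hinner (y : ℝ) : ∫ z in Ioi (x - y), y * 2 * exp (-y) * exp (-z) = 2 * exp (-x) * y := by
    rw [integral_const_mul, integral_exp_neg_Ioi, mul_assoc _ (exp _), ← exp_add]
    ring_nf
  simp_rw [hinner]
  rw [integral_const_mul, ← integral_Ioc_eq_integral_Ioo,
    ← intervalIntegral.integral_of_le (le_of_lt hx), integral_id]
  ring

end Exponential

section Weight

variable {a b : ℝ}

lemma measurable_weight : Measurable (weight a b) := by
  unfold weight
  exact Measurable.ite measurableSet_Iic (by fun_prop) (by fun_prop)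

lemma weight_nonneg {x : ℝ} (hx : 0 ≤ x) : 0 ≤ weight a b x := by
  unfold weight
  split_ifs <;> positivity

lemma rpow_le_rpow_abs {R x : ℝ} (hR : 1 < R) (hx : x ∈ Icc R⁻¹ R) (s : ℝ) :
    x ^ s ≤ R ^ |s| := by
  have hR₀ : 0 < R := one_pos.trans hR
  have hx₀ : 0 < x := (inv_pos.2 hR₀).trans_le hx.1
  rcases le_total 0 s with hs | hs
  · rw [abs_of_nonneg hs]
    exact rpow_le_rpow hx₀.le hx.2 hs
  · rw [abs_of_nonpos hs, rpow_neg hR₀.le, ← inv_rpow hR₀.le]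
    exact rpow_le_rpow_of_nonpos (inv_pos.2 hR₀) hx.1 hs

lemma weight_le {c t R x : ℝ} (hc : c ≤ a) (ht : b ≤ t) (hR : 1 < R) (hx : 0 < x) :
    weight a b x ≤ R ^ (c - a) * x ^ c + R ^ (b - t) * x ^ t +
      (Ioo R⁻¹ R).indicator (fun _ => R ^ |a| + R ^ |b|) x := by
  have hR₀ : 0 < R := one_pos.trans hR
  have hsplit (s s' : ℝ) : x ^ s = x ^ (s - s') * x ^ s' := by rw [← rpow_add hx, sub_add_cancel]
  have hmid : 0 ≤ (Ioo R⁻¹ R).indicator (fun _ => R ^ |a| + R ^ |b|) x :=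
    indicator_nonneg (fun _ _ => by positivity) x
  rcases le_or_gt x R⁻¹ with hxR | hRx
  · have hle : x ^ (a - c) ≤ R ^ (c - a) := by
      rw [← neg_sub a c, rpow_neg hR₀.le, ← inv_rpow hR₀.le]
      exact rpow_le_rpow hx.le hxR (sub_nonneg.2 hc)
    rw [weight, if_pos (hxR.trans (inv_le_one_of_one_le₀ hR.le)), hsplit a c, add_assoc]
    exact le_add_of_le_of_nonneg (by gcongr) (by positivity)
  rcases le_or_gt R x with hxR | hxR
  · have hle : x ^ (b - t) ≤ R ^ (b - t) := rpow_le_rpow_of_nonpos hR₀ hxR (sub_nonpos.2 ht)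
    rw [weight, if_neg (hR.trans_le hxR).not_ge, hsplit b t]
    exact le_add_of_le_of_nonneg
      (le_add_of_nonneg_of_le (by positivity) (by gcongr)) hmid
  · rw [indicator_of_mem (show x ∈ Ioo R⁻¹ R from ⟨hRx, hxR⟩)]
    refine le_add_of_nonneg_of_le (by positivity) ?_
    have hle := rpow_le_rpow_abs hR ⟨hRx.le, hxR.le⟩
    rw [weight]
    split_ifs
    · exact le_add_of_le_of_nonneg (hle a) (by positivity)
    · exact le_add_of_nonneg_of_le (by positivity) (hle b)

lemma lintegral_mul_weight_le {F : ℝ → ℝ≥0∞} (hF : AEMeasurable F (volume.restrict (Ioi 0)))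
    {c t R : ℝ} (hc : c ≤ a) (ht : b ≤ t) (hR : 1 < R) :
    ∫⁻ x in Ioi 0, F x * ENNReal.ofReal (weight a b x) ≤
      ENNReal.ofReal (R ^ (c - a)) * (∫⁻ x in Ioi 0, F x * ENNReal.ofReal (x ^ c)) +
      ENNReal.ofReal (R ^ (b - t)) * (∫⁻ x in Ioi 0, F x * ENNReal.ofReal (x ^ t)) +
      ENNReal.ofReal (R ^ |a| + R ^ |b|) * ∫⁻ x in Ioo R⁻¹ R, F x := by
  have hR₀ : 0 < R := one_pos.trans hR
  have hsub : Ioo R⁻¹ R ∩ Ioi 0 = Ioo R⁻¹ R :=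
    inter_eq_left.2 fun x hx => (inv_pos.2 hR₀).trans hx.1
  have hFpow (s : ℝ) :
      AEMeasurable (fun x => F x * ENNReal.ofReal (x ^ s)) (volume.restrict (Ioi 0)) :=
    hF.mul (by fun_prop)
  rw [← hsub, ← setLIntegral_indicator measurableSet_Ioo,
    ← lintegral_const_mul'' _ (hFpow c), ← lintegral_const_mul'' _ (hFpow t),
    ← lintegral_const_mul'' _ (hF.indicator measurableSet_Ioo),
    ← lintegral_add_left' ((hFpow c).const_mul _),
    ← lintegral_add_right' _ ((hF.indicator measurableSet_Ioo).const_mul _)]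
  refine setLIntegral_mono' measurableSet_Ioi fun x hx => ?_
  calc F x * ENNReal.ofReal (weight a b x)
      ≤ F x * (ENNReal.ofReal (R ^ (c - a)) * ENNReal.ofReal (x ^ c) +
          ENNReal.ofReal (R ^ (b - t)) * ENNReal.ofReal (x ^ t) +
          ENNReal.ofReal ((Ioo R⁻¹ R).indicator (fun _ => R ^ |a| + R ^ |b|) x)) := by
        rw [← ENNReal.ofReal_mul (by positivity), ← ENNReal.ofReal_mul (by positivity)]
        gcongr
        refine (ENNReal.ofReal_le_ofReal (weight_le hc ht hR hx)).trans ?_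
        exact ENNReal.ofReal_add_le.trans (by gcongr; exact ENNReal.ofReal_add_le)
    _ = _ := by
        by_cases hxR : x ∈ Ioo R⁻¹ R
        · simp only [indicator_of_mem hxR]
          ring
        · simp only [indicator_of_notMem hxR, ENNReal.ofReal_zero]
          ring

theorem tendsto_lintegral_mul_weight {ι : Type*} {l : Filter ι} {F : ι → ℝ → ℝ≥0∞}
    (hF : ∀ i, AEMeasurable (F i) (volume.restrict (Ioi 0))) {c t : ℝ} (hc : c < a) (ht : b < t)
    {C : ℝ≥0} (hFc : ∀ᶠ i in l, ∫⁻ x in Ioi 0, F i x * ENNReal.ofReal (x ^ c) ≤ C)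
    (hFt : ∀ᶠ i in l, ∫⁻ x in Ioi 0, F i x * ENNReal.ofReal (x ^ t) ≤ C)
    (hmid : ∀ r R : ℝ, 0 < r → Tendsto (fun i => ∫⁻ x in Ioo r R, F i x) l (𝓝 0)) :
    Tendsto (fun i => ∫⁻ x in Ioi 0, F i x * ENNReal.ofReal (weight a b x)) l (𝓝 0) := by
  refine ENNReal.tendsto_nhds_zero.2 fun η hη => ?_
  have hη' : 0 < η / 2 := ENNReal.half_pos hη.ne'
  have htail {s s' : ℝ} (h : s < s') :
      Tendsto (fun R : ℝ => ENNReal.ofReal (R ^ (s - s'))) atTop (𝓝 0) := by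
    simpa using ENNReal.tendsto_ofReal (tendsto_rpow_neg_atTop (sub_pos.2 h))
  have hlim : Tendsto (fun R : ℝ => ENNReal.ofReal (R ^ (c - a)) * C +
      ENNReal.ofReal (R ^ (b - t)) * C) atTop (𝓝 0) := by
    simpa using (ENNReal.Tendsto.mul_const (b := (C : ℝ≥0∞)) (htail hc)
      (Or.inr ENNReal.coe_ne_top)).add
      (ENNReal.Tendsto.mul_const (b := (C : ℝ≥0∞)) (htail ht) (Or.inr ENNReal.coe_ne_top))
  obtain ⟨R, hRη, hR⟩ := ((hlim.eventually_le_const hη').and (eventually_gt_atTop 1)).exists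
  have hmidR := ENNReal.Tendsto.const_mul (a := ENNReal.ofReal (R ^ |a| + R ^ |b|))
    (hmid R⁻¹ R (inv_pos.2 (one_pos.trans hR))) (Or.inr ENNReal.ofReal_ne_top)
  rw [mul_zero] at hmidR
  filter_upwards [hFc, hFt, hmidR.eventually_le_const hη'] with i hic hit hi
  refine (lintegral_mul_weight_le (hF i) hc.le ht.le hR).trans ?_
  rw [← ENNReal.add_halves η]
  refine add_le_add (le_trans ?_ hRη) hi
  gcongr

end Weight

section GlobalConvergence

variable {a b : ℝ} {K K₀ : ℝ → ℝ → ℝ} {φ φ₀ : ℝ → ℝ}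

theorem exists_rpowMoment_le_of_neg_one_lt (hα : α ∈ Ico 0 1) {s : ℝ} (hs : -1 < s) :
    ∃ ε₀ > 0, ∃ C : ℝ≥0, ∀ (ε : ℝ) (k : ℝ × ℝ → ℝ≥0∞) (μ : Measure ℝ) [SFinite μ],
      ε ∈ Icc 0 ε₀ → IsNearTwo α ε k → IsMeasureProfile k μ → rpowMoment μ s ≤ C := by
  rcases lt_or_ge s 1 with hs₁ | hs₁
  · exact exists_rpowMoment_le_of_mem_Ioo hα ⟨hs, hs₁⟩
  · obtain ⟨C, hC⟩ := exists_rpowMoment_le hα zero_le_one hs₁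
    exact ⟨1, one_pos, C, fun ε k μ _ hε hk hμ => hC k μ (hk.mono hε.2) hμ⟩

lemma IsProfile.aemeasurable (hprof : IsProfile K φ) :
    AEMeasurable φ (volume.restrict (Ioi 0)) :=
  hprof.1.aestronglyMeasurable.aemeasurable

lemma lintegral_abs_sub_mul_rpow_le (hprof : IsProfile K φ) (hprof₀ : IsProfile K₀ φ₀) (s : ℝ) :
    ∫⁻ x in Ioi 0, ENNReal.ofReal |φ x - φ₀ x| * ENNReal.ofReal (x ^ s) ≤
      rpowMoment (profileMeasure φ) s + rpowMoment (profileMeasure φ₀) s := by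
  have hpow : Measurable fun x : ℝ => ENNReal.ofReal (x ^ s) := by fun_prop
  have hmeas : AEMeasurable (fun x => ENNReal.ofReal (φ x) * ENNReal.ofReal (x ^ s))
      (volume.restrict (Ioi 0)) := hprof.aemeasurable.ennreal_ofReal.mul hpow.aemeasurable
  rw [rpowMoment, rpowMoment, lintegral_profileMeasure hprof.aemeasurable hpow,
    lintegral_profileMeasure hprof₀.aemeasurable hpow,
    ← lintegral_add_left' hmeas]
  refine lintegral_mono_ae ?_
  filter_upwards [hprof.2.1, hprof₀.2.1] with x hφ hφ₀
  rw [← add_mul]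
  gcongr
  refine (ENNReal.ofReal_le_ofReal (abs_sub _ _)).trans ?_
  rw [abs_of_nonneg hφ, abs_of_nonneg hφ₀]
  exact ENNReal.ofReal_add_le

variable {ι : Type*} {l : Filter ι} {e : ι → ℝ} {L : ι → ℝ → ℝ → ℝ}
  {ψ : ι → ℝ → ℝ}

lemma exists_eventually_lintegral_abs_sub_mul_rpow_le (hα : α ∈ Ico 0 1) (he₀ : ∀ i, 0 ≤ e i)
    (he : Tendsto e l (𝓝 0)) (hL : ∀ i, IsNearTwo α (e i) (quadrantKernel (L i)))
    (hψ : ∀ i, IsProfile (L i) (ψ i)) (hψ' : ∀ i, IsNormalised (ψ i))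
    (hk₀ : IsNearTwo α 0 (quadrantKernel K₀)) (hφ₀ : IsProfile K₀ φ₀) (hφ₀' : IsNormalised φ₀)
    {s : ℝ} (hs : -1 < s) :
    ∃ C : ℝ≥0, ∀ᶠ i in l,
      ∫⁻ x in Ioi 0, ENNReal.ofReal |ψ i x - φ₀ x| * ENNReal.ofReal (x ^ s) ≤ C := by
  have hα' : α ∈ Icc 0 1 := Ico_subset_Icc_self hα
  obtain ⟨ε₀, hε₀, C, hC⟩ := exists_rpowMoment_le_of_neg_one_lt hα hs
  refine ⟨C + C, ?_⟩
  filter_upwards [he.eventually_le_const hε₀] with i hi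
  rw [ENNReal.coe_add]
  exact (lintegral_abs_sub_mul_rpow_le (hψ i) hφ₀ s).trans <| add_le_add
    (hC _ _ _ ⟨he₀ i, hi⟩ (hL i) ((hψ i).isMeasureProfile (hψ' i) (hL i) hα' (he₀ i)))
    (hC _ _ _ ⟨le_rfl, hε₀.le⟩ hk₀ (hφ₀.isMeasureProfile hφ₀' hk₀ hα' le_rfl))

theorem tendsto_lintegral_abs_sub_mul_weight [l.IsCountablyGenerated] (hα : α ∈ Ico 0 1)
    (ha : -1 < a) (he₀ : ∀ i, 0 ≤ e i) (he : Tendsto e l (𝓝 0))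
    (hL : ∀ i, IsNearTwo α (e i) (quadrantKernel (L i)))
    (hψ : ∀ i, IsProfile (L i) (ψ i)) (hψ' : ∀ i, IsNormalised (ψ i))
    (hk₀ : IsNearTwo α 0 (quadrantKernel K₀)) (hφ₀ : IsProfile K₀ φ₀) (hφ₀' : IsNormalised φ₀) :
    Tendsto (fun i => ∫⁻ x in Ioi 0,
      ENNReal.ofReal |ψ i x - φ₀ x| * ENNReal.ofReal (weight a b x)) l (𝓝 0) := by
  obtain ⟨c, hc, hca⟩ := exists_between ha
  have ht : -1 < |b| + 1 := by linarith [abs_nonneg b]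
  obtain ⟨C, hC⟩ := exists_eventually_lintegral_abs_sub_mul_rpow_le hα he₀ he hL hψ hψ' hk₀ hφ₀
    hφ₀' hc
  obtain ⟨D, hD⟩ := exists_eventually_lintegral_abs_sub_mul_rpow_le hα he₀ he hL hψ hψ' hk₀ hφ₀
    hφ₀' ht
  refine tendsto_lintegral_mul_weight
    (fun i => ((hψ i).aemeasurable.sub hφ₀.aemeasurable).abs.ennreal_ofReal) hca
    ((le_abs_self b).trans_lt (lt_add_one _)) (C := max C D) ?_ ?_
    fun r R hr => tendsto_setLIntegral_abs_sub hα he₀ he hL hψ hψ' hk₀ hφ₀ hφ₀' hr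
  · exact hC.mono fun i hi => hi.trans (by simp)
  · exact hD.mono fun i hi => hi.trans (by simp)

theorem exists_lintegral_abs_sub_exp_neg_mul_weight_le (b : ℝ) (hα : α ∈ Ico 0 1) (ha : -1 < a)
    {δ : ℝ≥0∞} (hδ : 0 < δ) :
    ∃ ε > 0, ∀ (K : ℝ → ℝ → ℝ) (φ : ℝ → ℝ), IsNearTwo α ε (quadrantKernel K) → IsProfile K φ →
      IsNormalised φ →
      ∫⁻ x in Ioi 0, ENNReal.ofReal |φ x - exp (-x)| * ENNReal.ofReal (weight a b x) ≤ δ := by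
  by_contra! hcon
  choose! L ψ hL hψ hψ' hgt using fun n : ℕ => hcon (1 / ((n : ℝ) + 1)) Nat.one_div_pos_of_nat
  have hlim := tendsto_lintegral_abs_sub_mul_weight (b := b) hα ha
    (fun n => Nat.one_div_pos_of_nat.le) tendsto_one_div_add_atTop_nhds_zero_nat hL hψ hψ'
    isNearTwo_quadrantKernel_two isProfile_exp_neg isNormalised_exp_neg
  obtain ⟨n, hn⟩ := (hlim.eventually_le_const hδ).exists
  exact (hgt n).not_ge hn

end GlobalConvergence

section Norm

variable {a b δ : ℝ} {g h : ℝ → ℝ}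

lemma lintegral_enorm_mul_weight (g : ℝ → ℝ) :
    ∫⁻ x in Ioi 0, ‖g x * weight a b x‖ₑ =
      ∫⁻ x in Ioi 0, ENNReal.ofReal |g x| * ENNReal.ofReal (weight a b x) := by
  refine setLIntegral_congr_fun measurableSet_Ioi fun x hx => ?_
  simp only [enorm_mul, Real.enorm_eq_ofReal_abs, abs_of_nonneg (weight_nonneg (le_of_lt hx))]

lemma MemX.of_lintegral_le (hg : AEMeasurable g (volume.restrict (Ioi 0)))
    (hle : ∫⁻ x in Ioi 0, ENNReal.ofReal |g x| * ENNReal.ofReal (weight a b x) ≤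
      ENNReal.ofReal δ) : MemX a b g :=
  ⟨(hg.mul measurable_weight.aemeasurable).aestronglyMeasurable,
    (lintegral_enorm_mul_weight g).trans_le hle |>.trans_lt ENNReal.ofReal_lt_top⟩

lemma Xnorm_le_of_lintegral_le (hδ : 0 ≤ δ)
    (hle : ∫⁻ x in Ioi 0, ENNReal.ofReal |g x| * ENNReal.ofReal (weight a b x) ≤
      ENNReal.ofReal δ) : Xnorm a b g ≤ δ := by
  have habs : ENNReal.ofReal |Xnorm a b g| ≤ ENNReal.ofReal δ := by
    rw [← Real.enorm_eq_ofReal_abs]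
    refine (enorm_integral_le_lintegral_enorm _).trans ?_
    simpa only [lintegral_enorm_mul_weight, abs_abs] using hle
  exact (le_abs_self _).trans ((ENNReal.ofReal_le_ofReal_iff hδ).1 habs)

lemma MemX.integrableOn_abs_mul (hg : MemX a b g) :
    IntegrableOn (fun x => |g x| * weight a b x) (Ioi 0) := by
  refine (Integrable.abs hg).congr ?_
  filter_upwards [ae_restrict_mem measurableSet_Ioi] with x hx
  rw [abs_mul, abs_of_nonneg (weight_nonneg (le_of_lt hx))]

lemma MemX.sub (hg : MemX a b g) (hh : MemX a b h) : MemX a b (fun x => g x - h x) := by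
  simpa only [MemX, IntegrableOn, sub_mul] using Integrable.sub' hg hh

lemma MemX.Xnorm_sub_le (hg : MemX a b g) (hh : MemX a b h) :
    Xnorm a b (fun x => g x - h x) ≤ Xnorm a b g + Xnorm a b h := by
  rw [Xnorm, Xnorm, Xnorm, ← integral_add hg.integrableOn_abs_mul hh.integrableOn_abs_mul]
  refine setIntegral_mono_on (hg.sub hh).integrableOn_abs_mul
    (hg.integrableOn_abs_mul.add hh.integrableOn_abs_mul) measurableSet_Ioi fun x hx => ?_
  rw [← add_mul]
  gcongr
  · exact weight_nonneg (le_of_lt hx)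
  · exact abs_sub _ _

end Norm

section Kern

variable {W : ℝ → ℝ → ℝ}

lemma GoodW.measurable_indicator_Kern (hW : GoodW α W) (ε : ℝ) :
    Measurable ((Ioi 0 ×ˢ Ioi 0).indicator fun p : ℝ × ℝ => Kern ε W p.1 p.2) := by
  rw [← piecewise_eq_indicator]
  exact ((hW.1.const_mul ε).const_add 2).measurable_piecewise continuousOn_const
    (measurableSet_Ioi.prod measurableSet_Ioi)

lemma GoodW.Kern_comm (hW : GoodW α W) {x y : ℝ} (hx : 0 < x) (hy : 0 < y) :
    Kern ε W x y = Kern ε W y x := by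
  rw [Kern, Kern, hW.2.1 x y hx hy]

lemma GoodW.Kern_mem_Icc {ε' : ℝ} (hW : GoodW α W) (hε : 0 ≤ ε) (hε' : ε ≤ ε') {x y : ℝ}
    (hx : 0 < x) (hy : 0 < y) :
    Kern ε W x y ∈ Icc 2 (2 + ε' * ((x / y) ^ α + (y / x) ^ α)) := by
  obtain ⟨hnonneg, hle⟩ := hW.2.2.2 x y hx hy
  refine ⟨le_add_of_nonneg_right (by positivity), ?_⟩
  exact add_le_add_right (mul_le_mul hε' hle hnonneg (hε.trans hε')) 2

end Kern

end SelfSimilarProfiles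

theorem stmt0_general {α a δ : ℝ} (b : ℝ) (hα : α ∈ Ico 0 1) (ha : -1 < a) (hδ : 0 < δ) :
    ∃ εstar > 0, ∀ K : ℝ → ℝ → ℝ,
      Measurable ((Ioi 0 ×ˢ Ioi 0).indicator fun p : ℝ × ℝ => K p.1 p.2) →
      (∀ x y, 0 < x → 0 < y → K x y = K y x) →
      (∀ x y, 0 < x → 0 < y → K x y ∈ Icc 2 (2 + εstar * ((x / y) ^ α + (y / x) ^ α))) →
      (∀ φ, IsProfile K φ → IsNormalised φ →
        MemX a b (fun x => φ x - exp (-x)) ∧ Xnorm a b (fun x => φ x - exp (-x)) ≤ δ) ∧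
      (∀ φ₁ φ₂, IsProfile K φ₁ → IsNormalised φ₁ → IsProfile K φ₂ → IsNormalised φ₂ →
        MemX a b (fun x => φ₁ x - φ₂ x) ∧ Xnorm a b (fun x => φ₁ x - φ₂ x) ≤ 2 * δ) := by
  obtain ⟨εstar, hpos, hle⟩ :=
    exists_lintegral_abs_sub_exp_neg_mul_weight_le b hα ha (ENNReal.ofReal_pos.2 hδ)
  refine ⟨εstar, hpos, fun K hK hsymm hbound => ?_⟩
  have hexp (φ : ℝ → ℝ) (hφ : IsProfile K φ) (hφ' : IsNormalised φ) :
      MemX a b (fun x => φ x - exp (-x)) ∧ Xnorm a b (fun x => φ x - exp (-x)) ≤ δ := by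
    have hclose := hle K φ (isNearTwo_quadrantKernel hK hsymm hbound) hφ hφ'
    exact ⟨.of_lintegral_le (hφ.aemeasurable.sub (by fun_prop)) hclose,
      Xnorm_le_of_lintegral_le hδ.le hclose⟩
  refine ⟨hexp, fun φ₁ φ₂ h₁ h₁' h₂ h₂' => ?_⟩
  obtain ⟨hmem₁, hle₁⟩ := hexp φ₁ h₁ h₁'
  obtain ⟨hmem₂, hle₂⟩ := hexp φ₂ h₂ h₂'
  have hmem := hmem₁.sub hmem₂
  have hnorm := hmem₁.Xnorm_sub_le hmem₂
  simp only [sub_sub_sub_cancel_right] at hmem hnorm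
  exact ⟨hmem, by linarith⟩

theorem stmt0 (α : ℝ) (hα : α ∈ Ioo (0:ℝ) 1) (W : ℝ → ℝ → ℝ) (hW : GoodW α W)
    (a b δ : ℝ) (ha : -1 < a) (hb : 0 < b) (hδ : 0 < δ) :
    ∃ εstar > 0, ∀ ε : ℝ, 0 < ε → ε ≤ εstar →
      (∀ φ : ℝ → ℝ, IsProfile (Kern ε W) φ → IsNormalised φ →
        ∫ x in Ioi (0:ℝ), |φ x - exp (-x)| * weight a b x ≤ δ) ∧
      (∀ φ₁ φ₂ : ℝ → ℝ, IsProfile (Kern ε W) φ₁ → IsNormalised φ₁ →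
        IsProfile (Kern ε W) φ₂ → IsNormalised φ₂ →
        ∫ x in Ioi (0:ℝ), |φ₁ x - φ₂ x| * weight a b x ≤ 2 * δ) := by
  obtain ⟨εstar, hpos, h⟩ := stmt0_general b (Ioo_subset_Ico_self hα) ha hδ
  refine ⟨εstar, hpos, fun ε hε hle => ?_⟩
  obtain ⟨hexp, hpair⟩ := h _ (hW.measurable_indicator_Kern ε) (fun _ _ => hW.Kern_comm)
    fun _ _ => hW.Kern_mem_Icc hε.le hle
  exact ⟨fun φ hφ hφ' => (hexp φ hφ hφ').2,
    fun φ₁ φ₂ h₁ h₁' h₂ h₂' => (hpair φ₁ φ₂ h₁ h₁' h₂ h₂').2⟩
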